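/- arXiv:2503.04564 — 4 statements merged into one kernel-verified Lean document; each statement's English description precedes it below -/
import Mathlib

section
/- Converse bound R_Z ≥ 1/B: in the cyclic hierarchical secure aggregation model with relay security: B · Σ_{k=1}^K H(Z_k) ≥ K · L; in particular max_{k∈{1,…,K}} H(Z_k) ≥ L/B. -/
/-!
For every single user `k` one has `B · H(Z_k) ≥ L`; both conjuncts follow at once.

Write `X_k` for the tuple of messages sent by user `k`.
* `X_k` must carry `W_k`: together with `(W_j)_{j ≠ k}` and all keys it determines all messages,
  hence the sum of the inputs, hence `W_k`.  So
  `K L + H(Z) = H(W, Z) ≤ H(X_k) + H((W_j)_{j ≠ k}) + H(Z) ≤ H(X_k) + (K - 1) L + H(Z)`,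
  that is `H(X_k) ≥ L` (`le_ent_messages`).
* Relay security makes each `X_{k,i}` independent of `W_k`, while `X_{k,i}` is a function of
  `(W_k, Z_k)`, so `H(X_{k,i}) + H(W_k) = H(X_{k,i}, W_k) ≤ H(W_k) + H(Z_k)`
  (`ent_message_le_ent_key`).

Summing over the at most `B` relays of user `k`, `L ≤ H(X_k) ≤ ∑ i, H(X_{k,i}) ≤ B · H(Z_k)`.

The Shannon inequalities are obtained from `ent_eq_sum`, which writes an entropy as a sum over the
sample space, and are phrased with the relation `Det` (functional dependence on the support of
`p`); `ent_submodular_of_det` is the general form of submodularity that is used.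
-/


open scoped BigOperators

noncomputable def pr {Ω : Type} [Fintype Ω] {α : Type} [DecidableEq α]
    (p : Ω → ℝ) (X : Ω → α) (a : α) : ℝ :=
  ∑ ω, if X ω = a then p ω else 0

noncomputable def ent {Ω : Type} [Fintype Ω] {α : Type} [Fintype α] [DecidableEq α]
    (q : ℕ) (p : Ω → ℝ) (X : Ω → α) : ℝ :=
  -∑ a, pr p X a * Real.logb q (pr p X a)

noncomputable def condEnt {Ω : Type} [Fintype Ω] {α β : Type}
    [Fintype α] [DecidableEq α] [Fintype β] [DecidableEq β]
    (q : ℕ) (p : Ω → ℝ) (X : Ω → α) (Y : Ω → β) : ℝ :=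
  ent q p (fun ω => (X ω, Y ω)) - ent q p Y

noncomputable def mutInfo {Ω : Type} [Fintype Ω] {α β : Type}
    [Fintype α] [DecidableEq α] [Fintype β] [DecidableEq β]
    (q : ℕ) (p : Ω → ℝ) (X : Ω → α) (Y : Ω → β) : ℝ :=
  ent q p X + ent q p Y - ent q p (fun ω => (X ω, Y ω))

noncomputable def condMutInfo {Ω : Type} [Fintype Ω] {α β γ : Type}
    [Fintype α] [DecidableEq α] [Fintype β] [DecidableEq β] [Fintype γ] [DecidableEq γ]
    (q : ℕ) (p : Ω → ℝ) (X : Ω → α) (Y : Ω → β) (Z : Ω → γ) : ℝ :=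
  condEnt q p X Z + condEnt q p Y Z - condEnt q p (fun ω => (X ω, Y ω)) Z

def IsPMF {Ω : Type} [Fintype Ω] (p : Ω → ℝ) : Prop :=
  (∀ ω, 0 ≤ p ω) ∧ ∑ ω, p ω = 1

def IndepRV {Ω : Type} [Fintype Ω] {α β : Type} [DecidableEq α] [DecidableEq β]
    (p : Ω → ℝ) (X : Ω → α) (Y : Ω → β) : Prop :=
  ∀ a b, pr p (fun ω => (X ω, Y ω)) (a, b) = pr p X a * pr p Y b

/-- The set of `B` relays `{k, k+1, …, k+B−1}` (indices mod `K`) associated with user `k`. -/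
def Bset (K B : ℕ) (k : Fin K) : Finset (Fin K) :=
  (Finset.range B).image fun j => ⟨((k : ℕ) + j) % K, Nat.mod_lt _ k.pos⟩

/-- The set of users associated with relay `i`. -/
def Uset (K B : ℕ) (i : Fin K) : Finset (Fin K) :=
  Finset.univ.filter fun k => i ∈ Bset K B k

/-! ### Entropy and functional dependence -/

section Entropy

set_option linter.unusedSectionVars false

variable {Ω : Type} [Fintype Ω] {α β γ δ : Type}
  [Fintype α] [DecidableEq α] [Fintype β] [DecidableEq β]
  [Fintype γ] [DecidableEq γ] [Fintype δ] [DecidableEq δ]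
  {q : ℕ} {p : Ω → ℝ}

/-- `X` is a function of `Y` almost surely: on the support of `p`, the value of `Y` determines
that of `X`. -/
def Det {Ω α β : Type} (p : Ω → ℝ) (X : Ω → α) (Y : Ω → β) : Prop :=
  ∀ ω ω', 0 < p ω → 0 < p ω' → Y ω = Y ω' → X ω = X ω'

theorem sum_pr_mul (X : Ω → α) (f : α → ℝ) :
    ∑ a, pr p X a * f a = ∑ ω, p ω * f (X ω) := by
  simp only [pr, Finset.sum_mul, ite_mul, zero_mul]
  rw [Finset.sum_comm]
  simp

theorem ent_eq_sum (X : Ω → α) :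
    ent q p X = -∑ ω, p ω * Real.logb q (pr p X (X ω)) := by
  rw [ent, sum_pr_mul X fun a => Real.logb q (pr p X a)]

theorem sum_pr (hp : IsPMF p) (X : Ω → α) : ∑ a, pr p X a = 1 := by
  have h := sum_pr_mul (p := p) X fun _ => 1
  simpa [hp.2] using h

theorem pr_nonneg (hp : IsPMF p) (X : Ω → α) (a : α) : 0 ≤ pr p X a :=
  Finset.sum_nonneg fun ω _ => by split_ifs <;> simp [hp.1]

theorem le_pr (hp : IsPMF p) (X : Ω → α) (ω : Ω) : p ω ≤ pr p X (X ω) := by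
  have h := Finset.single_le_sum (f := fun ω' => if X ω' = X ω then p ω' else 0)
    (fun ω' _ => by split_ifs <;> simp [hp.1]) (Finset.mem_univ ω)
  simpa [pr] using h

theorem pr_pos (hp : IsPMF p) (X : Ω → α) {ω : Ω} (h : 0 < p ω) : 0 < pr p X (X ω) :=
  h.trans_le (le_pr hp X ω)

theorem pr_le_one (hp : IsPMF p) (X : Ω → α) (a : α) : pr p X a ≤ 1 := by
  rw [← sum_pr hp X]
  exact Finset.single_le_sum (fun b _ => pr_nonneg hp X b) (Finset.mem_univ a)

theorem pr_le_of_det (hp : IsPMF p) {X : Ω → α} {Y : Ω → β} (h : Det p X Y) {ω : Ω}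
    (hω : 0 < p ω) : pr p Y (Y ω) ≤ pr p X (X ω) := by
  refine Finset.sum_le_sum fun ω' _ => ?_
  rcases (hp.1 ω').eq_or_lt with h0 | h0
  · simp [← h0]
  · by_cases hY : Y ω' = Y ω
    · simp [hY, h _ _ h0 hω hY]
    · simp only [hY, if_false]
      split_ifs <;> simp [hp.1]

theorem ent_nonneg (hq : 1 < q) (hp : IsPMF p) (X : Ω → α) : 0 ≤ ent q p X := by
  rw [ent, neg_nonneg]
  refine Finset.sum_nonpos fun a _ => mul_nonpos_of_nonneg_of_nonpos (pr_nonneg hp X a) ?_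
  exact Real.logb_nonpos (by exact_mod_cast hq) (pr_nonneg hp X a) (pr_le_one hp X a)

theorem ent_le_of_det (hq : 1 < q) (hp : IsPMF p) {X : Ω → α} {Y : Ω → β} (h : Det p X Y) :
    ent q p X ≤ ent q p Y := by
  rw [ent_eq_sum, ent_eq_sum, neg_le_neg_iff]
  refine Finset.sum_le_sum fun ω _ => ?_
  rcases (hp.1 ω).eq_or_lt with h0 | h0
  · simp [← h0]
  · exact mul_le_mul_of_nonneg_left (Real.logb_le_logb_of_le (by exact_mod_cast hq)
      (pr_pos hp Y h0) (pr_le_of_det hp h h0)) h0.le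

theorem det_of_condEnt_eq_zero (hq : 1 < q) (hp : IsPMF p) {X : Ω → α} {Y : Ω → β}
    (h : condEnt q p X Y = 0) : Det p X Y := by
  have hq' : (1 : ℝ) < q := by exact_mod_cast hq
  have hdet : Det p Y fun ω => (X ω, Y ω) := fun _ _ _ _ h => (Prod.ext_iff.1 h).2
  set D : Ω → ℝ := fun ω => p ω * Real.logb q (pr p Y (Y ω))
    - p ω * Real.logb q (pr p (fun ω => (X ω, Y ω)) (X ω, Y ω)) with hD
  -- `H(X | Y)` is the sum of the nonnegative quantities `D ω`, so each of them vanishes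
  have hD0 : ∀ ω ∈ Finset.univ, 0 ≤ D ω := by
    intro ω _
    rcases (hp.1 ω).eq_or_lt with h0 | h0
    · simp [hD, ← h0]
    · exact sub_nonneg.2 (mul_le_mul_of_nonneg_left (Real.logb_le_logb_of_le hq'
        (pr_pos hp (fun ω => (X ω, Y ω)) h0) (pr_le_of_det hp hdet h0)) h0.le)
  have hsum : ∑ ω, D ω = 0 := by
    rw [condEnt, ent_eq_sum, ent_eq_sum] at h
    rw [hD, Finset.sum_sub_distrib]
    linarith
  have hz := (Finset.sum_eq_zero_iff_of_nonneg hD0).1 hsum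
  intro ω ω' hω hω' hY
  by_contra hX
  have h1 := hz ω (Finset.mem_univ ω)
  have h2 : pr p (fun ω => (X ω, Y ω)) (X ω, Y ω) < pr p Y (Y ω) := by
    refine Finset.sum_lt_sum (fun ν _ => ?_) ⟨ω', Finset.mem_univ _, ?_⟩
    · by_cases hν : Y ν = Y ω
      · simp only [Prod.mk.injEq, hν, and_true, if_true]
        split_ifs <;> simp [hp.1]
      · simp [hν]
    · simp [hY.symm, Ne.symm hX, hω']
  have h3 := mul_lt_mul_of_pos_left
    (Real.logb_lt_logb hq' (pr_pos hp (fun ω => (X ω, Y ω)) hω) h2) hω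
  simp only [hD] at h1
  linarith

/-! ### Shannon inequalities -/

theorem sum_pr_prod_left (X : Ω → α) (Z : Ω → γ) (c : γ) :
    ∑ a, pr p (fun ω => (X ω, Z ω)) (a, c) = pr p Z c := by
  simp only [pr]
  rw [Finset.sum_comm]
  refine Finset.sum_congr rfl fun ω _ => ?_
  by_cases h : Z ω = c <;> simp [h]

theorem ent_submodular (hq : 1 < q) (hp : IsPMF p) (X : Ω → α) (Y : Ω → β) (Z : Ω → γ) :
    ent q p (fun ω => (X ω, Y ω, Z ω)) + ent q p Z
      ≤ ent q p (fun ω => (X ω, Z ω)) + ent q p (fun ω => (Y ω, Z ω)) := by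
  have hlq : 0 < Real.log q := Real.log_pos (by exact_mod_cast hq)
  set P := pr p (fun ω => (X ω, Y ω, Z ω)) with hP
  set PX := pr p (fun ω => (X ω, Z ω)) with hPX
  set PY := pr p (fun ω => (Y ω, Z ω)) with hPY
  set PZ := pr p Z with hPZ
  set R : α × β × γ → ℝ := fun t =>
    PX (t.1, t.2.2) * PY (t.2.1, t.2.2) / (P t * PZ t.2.2) with hR
  -- `log t ≤ t - 1` applied to the likelihood ratio, at each point of the sample space
  have key : ∀ ω, p ω * Real.log (PX (X ω, Z ω)) + p ω * Real.log (PY (Y ω, Z ω))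
      - p ω * Real.log (P (X ω, Y ω, Z ω)) - p ω * Real.log (PZ (Z ω))
      ≤ p ω * R (X ω, Y ω, Z ω) - p ω := by
    intro ω
    rcases (hp.1 ω).eq_or_lt with h0 | h0
    · simp [← h0]
    · have a1 : 0 < PX (X ω, Z ω) := pr_pos hp (fun ω => (X ω, Z ω)) h0
      have a2 : 0 < PY (Y ω, Z ω) := pr_pos hp (fun ω => (Y ω, Z ω)) h0
      have a3 : 0 < P (X ω, Y ω, Z ω) := pr_pos hp (fun ω => (X ω, Y ω, Z ω)) h0
      have a4 : 0 < PZ (Z ω) := pr_pos hp Z h0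
      have h := Real.log_le_sub_one_of_pos (x := R (X ω, Y ω, Z ω)) (by simp only [hR]; positivity)
      have h' : Real.log (R (X ω, Y ω, Z ω)) = Real.log (PX (X ω, Z ω))
          + Real.log (PY (Y ω, Z ω)) - (Real.log (P (X ω, Y ω, Z ω)) + Real.log (PZ (Z ω))) := by
        simp only [hR]
        rw [Real.log_div (by positivity) (by positivity), Real.log_mul a1.ne' a2.ne',
          Real.log_mul a3.ne' a4.ne']
      rw [h'] at h
      nlinarith [mul_le_mul_of_nonneg_left h h0.le]
  have hR1 : ∑ ω, p ω * R (X ω, Y ω, Z ω) ≤ 1 := by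
    rw [← sum_pr_mul (fun ω => (X ω, Y ω, Z ω)) R]
    calc ∑ t, P t * R t
        ≤ ∑ t : α × β × γ, PX (t.1, t.2.2) * PY (t.2.1, t.2.2) / PZ t.2.2 := by
          refine Finset.sum_le_sum fun t _ => ?_
          have b1 : 0 ≤ PX (t.1, t.2.2) := pr_nonneg hp _ _
          have b2 : 0 ≤ PY (t.2.1, t.2.2) := pr_nonneg hp _ _
          have b4 : 0 ≤ PZ t.2.2 := pr_nonneg hp _ _
          rcases eq_or_ne (P t) 0 with h | h
          · rw [h, zero_mul]; positivity
          · simp only [hR]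
            rw [← mul_div_assoc, mul_div_mul_left _ _ h]
      _ = ∑ c, ∑ b, ∑ a, PX (a, c) * PY (b, c) / PZ c := by
          rw [Fintype.sum_prod_type, Finset.sum_comm, Fintype.sum_prod_type, Finset.sum_comm]
      _ = ∑ c, PZ c := by
          refine Finset.sum_congr rfl fun c _ => ?_
          simp only [← Finset.sum_div, ← Finset.sum_mul, ← Finset.mul_sum]
          rw [hPX, hPY, sum_pr_prod_left, sum_pr_prod_left, ← hPZ]
          rcases eq_or_ne (PZ c) 0 with h | h
          · simp [h]
          · field_simp
      _ = 1 := sum_pr hp Z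
  have hs := Finset.sum_le_sum fun ω (_ : ω ∈ Finset.univ) => key ω
  simp only [Finset.sum_sub_distrib, Finset.sum_add_distrib, hp.2] at hs
  simp only [ent_eq_sum, Real.logb, ← mul_div_assoc, ← Finset.sum_div]
  rw [← neg_div, ← neg_div, ← neg_div, ← neg_div, ← add_div, ← add_div]
  refine div_le_div_of_nonneg_right ?_ hlq.le
  linarith

/-- Submodularity up to almost sure functional dependence: `X`, `Y` play the roles of two sets of
variables, `D` is a part of their union and `C` a part of their intersection. -/
theorem ent_submodular_of_det (hq : 1 < q) (hp : IsPMF p) {X : Ω → α} {Y : Ω → β} {C : Ω → γ}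
    {D : Ω → δ} (hD : Det p D fun ω => (X ω, Y ω)) (hCX : Det p C X) (hCY : Det p C Y) :
    ent q p D + ent q p C ≤ ent q p X + ent q p Y := by
  have h := ent_submodular hq hp X Y C
  have h1 : ent q p D ≤ ent q p (fun ω => (X ω, Y ω, C ω)) :=
    ent_le_of_det hq hp fun ω ω' a b e => hD ω ω' a b (by simp_all)
  have h2 : ent q p (fun ω => (X ω, C ω)) ≤ ent q p X :=
    ent_le_of_det hq hp fun ω ω' a b e => Prod.ext e (hCX ω ω' a b e)
  have h3 : ent q p (fun ω => (Y ω, C ω)) ≤ ent q p Y :=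
    ent_le_of_det hq hp fun ω ω' a b e => Prod.ext e (hCY ω ω' a b e)
  linarith

theorem ent_le_add_of_det (hq : 1 < q) (hp : IsPMF p) {X : Ω → α} {Y : Ω → β} {D : Ω → δ}
    (hD : Det p D fun ω => (X ω, Y ω)) : ent q p D ≤ ent q p X + ent q p Y := by
  have h := ent_submodular_of_det (C := fun _ => ()) hq hp hD (fun _ _ _ _ _ => rfl)
    (fun _ _ _ _ _ => rfl)
  have h0 := ent_nonneg hq hp fun _ : Ω => ()
  linarith

theorem ent_pi_le {ι : Type} [DecidableEq ι] (hq : 1 < q) (hp : IsPMF p) (X : ι → Ω → α)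
    (s : Finset ι) :
    ent q p (fun ω => fun i : {i // i ∈ s} => X i.1 ω) ≤ ∑ i ∈ s, ent q p (X i) := by
  induction s using Finset.induction_on with
  | empty =>
    refine le_of_eq ?_
    have h1 : ∀ a, pr p (fun ω => fun i : {i // i ∈ (∅ : Finset ι)} => X i.1 ω) a = 1 := by
      intro a
      rw [pr, ← hp.2]
      refine Finset.sum_congr rfl fun ω _ => if_pos ?_
      funext i
      exact absurd i.2 (Finset.notMem_empty _)
    simp [ent, h1]
  | insert j s hj ih =>
    rw [Finset.sum_insert hj]
    refine (ent_le_add_of_det (X := X j) (Y := fun ω => fun i : {i // i ∈ s} => X i.1 ω)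
      hq hp ?_).trans (by linarith)
    intro ω ω' _ _ e
    obtain ⟨e1, e2⟩ := Prod.ext_iff.1 e
    funext ⟨i, hi⟩
    rcases Finset.mem_insert.1 hi with rfl | hi'
    · exact e1
    · exact congrFun e2 ⟨i, hi'⟩

theorem ent_le_logb_card (hq : 1 < q) (hp : IsPMF p) (X : Ω → α) :
    ent q p X ≤ Real.logb q (Fintype.card α) := by
  have hlq : 0 < Real.log q := Real.log_pos (by exact_mod_cast hq)
  have hne : Nonempty α := by
    by_contra h
    rw [not_nonempty_iff] at h
    simpa using sum_pr hp X
  set n : ℝ := (Fintype.card α : ℝ) with hn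
  have hn0 : 0 < n := by rw [hn]; exact_mod_cast Fintype.card_pos
  -- `log t ≤ t - 1` at `t = 1 / (n * pr p X a)`
  have key : ∀ a, -(pr p X a * Real.log (pr p X a)) - pr p X a * Real.log n
      ≤ 1 / n - pr p X a := by
    intro a
    rcases (pr_nonneg hp X a).eq_or_lt with h0 | h0
    · simp [← h0, hn0.le]
    · have h := Real.log_le_sub_one_of_pos (x := 1 / (n * pr p X a)) (by positivity)
      rw [Real.log_div one_ne_zero (by positivity), Real.log_one,
        Real.log_mul hn0.ne' h0.ne'] at h
      have h2 := mul_le_mul_of_nonneg_left h h0.le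
      have h3 : pr p X a * (1 / (n * pr p X a) - 1) = 1 / n - pr p X a := by field_simp
      rw [h3] at h2
      linarith
  have hs := Finset.sum_le_sum fun a (_ : a ∈ Finset.univ) => key a
  simp only [Finset.sum_sub_distrib, ← Finset.sum_mul, sum_pr hp, Finset.sum_neg_distrib,
    Finset.sum_const, Finset.card_univ, nsmul_eq_mul, ← hn] at hs
  rw [mul_one_div_cancel hn0.ne'] at hs
  simp only [ent, Real.logb, ← mul_div_assoc, ← Finset.sum_div]
  rw [← neg_div]
  refine div_le_div_of_nonneg_right ?_ hlq.le
  linarith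

theorem ent_prod_of_indep (hp : IsPMF p) {X : Ω → α} {Y : Ω → β} (h : IndepRV p X Y) :
    ent q p (fun ω => (X ω, Y ω)) = ent q p X + ent q p Y := by
  rw [ent_eq_sum, ent_eq_sum, ent_eq_sum, ← neg_add, ← Finset.sum_add_distrib]
  congr 1
  refine Finset.sum_congr rfl fun ω _ => ?_
  rcases (hp.1 ω).eq_or_lt with h0 | h0
  · simp [← h0]
  · rw [h, Real.logb_mul (pr_pos hp X h0).ne' (pr_pos hp Y h0).ne', mul_add]

theorem ent_of_uniform (hq : 1 < q) (hp : IsPMF p) {X : Ω → α} {n : ℕ}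
    (h : ∀ a, pr p X a = 1 / (q : ℝ) ^ n) : ent q p X = n := by
  have hq' : (1 : ℝ) < q := by exact_mod_cast hq
  rw [ent_eq_sum]
  simp only [h, one_div, Real.logb_inv, Real.logb_pow, Real.logb_self_eq_one hq', mul_one]
  rw [← Finset.sum_mul, hp.2]
  ring

/-- Zero mutual information passes to functions of the two variables. -/
theorem ent_add_le_of_mutInfo_eq_zero {α' β' : Type} [Fintype α'] [DecidableEq α'] [Fintype β']
    [DecidableEq β'] (hq : 1 < q) (hp : IsPMF p) {X : Ω → α} {Y : Ω → β} {X' : Ω → α'}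
    {Y' : Ω → β'} (h : mutInfo q p X Y = 0) (hX : Det p X' X) (hY : Det p Y' Y) :
    ent q p X' + ent q p Y' ≤ ent q p (fun ω => (X' ω, Y' ω)) := by
  rw [mutInfo] at h
  have h1 : ent q p (fun ω => (X ω, Y ω)) + ent q p X'
      ≤ ent q p X + ent q p (fun ω => (X' ω, Y ω)) :=
    ent_submodular_of_det hq hp (fun ω ω' _ _ e => by simp_all) hX
      (fun ω ω' _ _ e => by simp_all)
  have h2 : ent q p (fun ω => (X' ω, Y ω)) + ent q p Y'
      ≤ ent q p (fun ω => (X' ω, Y' ω)) + ent q p Y :=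
    ent_submodular_of_det hq hp (fun ω ω' _ _ e => by simp_all)
      (fun ω ω' _ _ e => by simp_all) hY
  linarith

end Entropy

/-! ### Entropy bounds for the messages -/

theorem mem_Uset {K B : ℕ} {i k : Fin K} : k ∈ Uset K B i ↔ i ∈ Bset K B k := by
  simp [Uset]

/-- The messages of a user carry at least `L` symbols: together with the other inputs and all keys
they determine the input of that user. -/
theorem le_ent_messages {K B L : ℕ} {F : Type} [Field F] [Fintype F] [DecidableEq F]
    {Ω : Type} [Fintype Ω] {p : Ω → ℝ} (hp : IsPMF p)
    {ζ χ υ : Type} [Fintype ζ] [DecidableEq ζ] [Fintype χ] [DecidableEq χ]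
    {W : Fin K → Ω → (Fin L → F)} {Z : Fin K → Ω → ζ}
    {Xm : Fin K → Fin K → Ω → χ} {Y : Fin K → Ω → υ}
    (hW : ∀ w : Fin K → Fin L → F,
      pr p (fun ω => fun k => W k ω) w = 1 / (Fintype.card F : ℝ) ^ (K * L))
    (hWZ : IndepRV p (fun ω => fun k => W k ω) (fun ω => fun k => Z k ω))
    (hX : ∀ k, Det p (fun ω => fun i : {i // i ∈ Bset K B k} => Xm k i.1 ω)
        (fun ω => (W k ω, Z k ω)))
    (hY : ∀ i, Det p (Y i) (fun ω => fun k : {k // k ∈ Uset K B i} => Xm k.1 i ω))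
    (hRec : Det p (fun ω => ∑ k, W k ω) (fun ω => fun i => Y i ω)) (k : Fin K) :
    (L : ℝ) ≤ ent (Fintype.card F) p
      (fun ω => fun i : {i // i ∈ Bset K B k} => Xm k i.1 ω) := by
  have hq : 1 < Fintype.card F := Fintype.one_lt_card
  have hq' : (1 : ℝ) < Fintype.card F := by exact_mod_cast hq
  have h1 : ent (Fintype.card F) p (fun ω => (fun k => W k ω, fun k => Z k ω))
      = ((K * L : ℕ) : ℝ) + ent (Fintype.card F) p (fun ω => fun k => Z k ω) := by
    rw [ent_prod_of_indep hp hWZ, ent_of_uniform hq hp hW]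
  have hdec : Det p (fun ω => (fun k => W k ω, fun k => Z k ω)) (fun ω =>
      (fun i : {i // i ∈ Bset K B k} => Xm k i.1 ω,
        (fun j : {j // j ≠ k} => W j.1 ω, fun k => Z k ω))) := by
    intro ω ω' hω hω' e
    simp only [Prod.mk.injEq] at e
    obtain ⟨eX, eW, eZ⟩ := e
    have eW' : ∀ j, j ≠ k → W j ω = W j ω' := fun j hj => congrFun eW ⟨j, hj⟩
    have hXall : ∀ j i, i ∈ Bset K B j → Xm j i ω = Xm j i ω' := by
      intro j i hi
      by_cases hj : j = k
      · subst hj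
        exact congrFun eX ⟨i, hi⟩
      · exact congrFun (hX j ω ω' hω hω' (Prod.ext (eW' j hj) (congrFun eZ j))) ⟨i, hi⟩
    have hsum : ∑ j, W j ω = ∑ j, W j ω' := by
      refine hRec ω ω' hω hω' (funext fun i => hY i ω ω' hω hω' (funext fun j => ?_))
      exact hXall j.1 i (mem_Uset.1 j.2)
    have hk : W k ω = W k ω' := by
      rw [← Finset.add_sum_erase _ _ (Finset.mem_univ k),
        ← Finset.add_sum_erase _ (fun j => W j ω') (Finset.mem_univ k),
        Finset.sum_congr rfl fun j hj => eW' j (Finset.ne_of_mem_erase hj)] at hsum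
      exact add_right_cancel hsum
    refine Prod.ext (funext fun j => ?_) eZ
    by_cases hj : j = k
    · rw [hj]; exact hk
    · exact eW' j hj
  have h2 := ent_le_add_of_det hq hp hdec
  have h3 := ent_le_add_of_det (X := fun ω => fun j : {j // j ≠ k} => W j.1 ω)
    (Y := fun ω => fun k => Z k ω) hq hp (fun _ _ _ _ e => e)
  have h4 := ent_le_logb_card hq hp fun ω => fun j : {j // j ≠ k} => W j.1 ω
  have hc : Real.logb (Fintype.card F) (Fintype.card ({j : Fin K // j ≠ k} → Fin L → F))
      = L * ((K : ℝ) - 1) := by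
    have hc' : Fintype.card {j : Fin K // j ≠ k} = K - 1 := by simp
    rw [Fintype.card_fun, Fintype.card_fun, hc', Fintype.card_fin, Nat.cast_pow, Nat.cast_pow,
      Real.logb_pow, Real.logb_pow, Real.logb_self_eq_one hq', Nat.cast_pred k.pos]
    ring
  rw [hc] at h4
  push_cast at h1
  linarith

/-- A message that is independent of the input of its sender has at most the entropy of the key. -/
theorem ent_message_le_ent_key {K B L : ℕ} {F : Type} [Fintype F] [DecidableEq F]
    {Ω : Type} [Fintype Ω] {p : Ω → ℝ} (hp : IsPMF p) {q : ℕ} (hq : 1 < q)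
    {ζ χ : Type} [Fintype ζ] [DecidableEq ζ] [Fintype χ] [DecidableEq χ]
    {W : Fin K → Ω → (Fin L → F)} {Z : Fin K → Ω → ζ} {Xm : Fin K → Fin K → Ω → χ}
    {k i : Fin K} (hi : i ∈ Bset K B k)
    (hX : Det p (fun ω => fun i : {i // i ∈ Bset K B k} => Xm k i.1 ω)
        (fun ω => (W k ω, Z k ω)))
    (hRelaySec : mutInfo q p (fun ω => fun k : {k // k ∈ Uset K B i} => Xm k.1 i ω)
        (fun ω => fun k => W k ω) = 0) :
    ent q p (Xm k i) ≤ ent q p (Z k) := by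
  have h1 : ent q p (Xm k i) + ent q p (W k) ≤ ent q p (fun ω => (Xm k i ω, W k ω)) :=
    ent_add_le_of_mutInfo_eq_zero hq hp hRelaySec
      (fun _ _ _ _ e => congrFun e ⟨k, mem_Uset.2 hi⟩) (fun _ _ _ _ e => congrFun e k)
  have h2 : ent q p (fun ω => (Xm k i ω, W k ω)) ≤ ent q p (W k) + ent q p (Z k) :=
    ent_le_add_of_det hq hp fun ω ω' a b e =>
      Prod.ext (congrFun (hX ω ω' a b e) ⟨i, hi⟩) (Prod.ext_iff.1 e).1
  linarith

/-- converse bound `R_Z ≥ 1/B` under relay security: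
`B · Σ_{k=1}^K H(Z_k) ≥ K · L`; in particular some user `k` has `H(Z_k) ≥ L/B`. -/
theorem hsa_RZ_ge_one_div_B
    {K B L : ℕ} (hK : 2 ≤ K) (hB1 : 1 ≤ B) (hBK : B ≤ K) (hL : 1 ≤ L)
    {F : Type} [Field F] [Fintype F] [DecidableEq F]
    {Ω : Type} [Fintype Ω] (p : Ω → ℝ) (hp : IsPMF p)
    {ζ χ υ : Type} [Fintype ζ] [DecidableEq ζ] [Fintype χ] [DecidableEq χ]
    [Fintype υ] [DecidableEq υ]
    (W : Fin K → Ω → (Fin L → F)) (Z : Fin K → Ω → ζ)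
    (Xm : Fin K → Fin K → Ω → χ) (Y : Fin K → Ω → υ)
    -- the inputs are i.i.d. uniform on 𝔽_q^L
    (hW : ∀ w : Fin K → Fin L → F,
      pr p (fun ω => fun k => W k ω) w = 1 / (Fintype.card F : ℝ) ^ (K * L))
    -- the inputs are independent of the keys
    (hWZ : IndepRV p (fun ω => fun k => W k ω) (fun ω => fun k => Z k ω))
    -- user messages are functions of the user's input and key
    (hX : ∀ k : Fin K,
      condEnt (Fintype.card F) p
        (fun ω => fun i : {i // i ∈ Bset K B k} => Xm k i.1 ω)
        (fun ω => (W k ω, Z k ω)) = 0)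
    -- relay messages are functions of the received messages
    (hY : ∀ i : Fin K,
      condEnt (Fintype.card F) p (Y i)
        (fun ω => fun k : {k // k ∈ Uset K B i} => Xm k.1 i ω) = 0)
    -- the server recovers the sum of the inputs
    (hRec : condEnt (Fintype.card F) p
      (fun ω => ∑ k, W k ω) (fun ω => fun i => Y i ω) = 0)
    -- relay security
    (hRelaySec : ∀ i : Fin K,
      mutInfo (Fintype.card F) p
        (fun ω => fun k : {k // k ∈ Uset K B i} => Xm k.1 i ω)
        (fun ω => fun k => W k ω) = 0) :
    (B : ℝ) * (∑ k, ent (Fintype.card F) p (Z k)) ≥ (K : ℝ) * L ∧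
      ∃ k : Fin K, ent (Fintype.card F) p (Z k) ≥ (L : ℝ) / B := by
  have hq : 1 < Fintype.card F := Fintype.one_lt_card
  have hB0 : (0 : ℝ) < B := by exact_mod_cast hB1
  have hX' := fun k => det_of_condEnt_eq_zero hq hp (hX k)
  have main : ∀ k, (L : ℝ) ≤ B * ent (Fintype.card F) p (Z k) := by
    intro k
    have hcard : ((Bset K B k).card : ℝ) ≤ B := by
      have h : (Bset K B k).card ≤ B := Finset.card_image_le.trans (by simp)
      exact_mod_cast h
    calc (L : ℝ) ≤ _ := le_ent_messages hp hW hWZ hX'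
          (fun i => det_of_condEnt_eq_zero hq hp (hY i)) (det_of_condEnt_eq_zero hq hp hRec) k
      _ ≤ ∑ i ∈ Bset K B k, ent (Fintype.card F) p (Xm k i) := ent_pi_le hq hp (Xm k) _
      _ ≤ ∑ _i ∈ Bset K B k, ent (Fintype.card F) p (Z k) :=
          Finset.sum_le_sum fun i hi => ent_message_le_ent_key hp hq hi (hX' k) (hRelaySec i)
      _ ≤ B * ent (Fintype.card F) p (Z k) := by
          rw [Finset.sum_const, nsmul_eq_mul]
          exact mul_le_mul_of_nonneg_right hcard (ent_nonneg hq hp _)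
  constructor
  · rw [ge_iff_le, Finset.mul_sum]
    have h := Finset.sum_le_sum fun k (_ : k ∈ Finset.univ) => main k
    simpa using h
  · refine ⟨⟨0, by omega⟩, ?_⟩
    rw [ge_iff_le, div_le_iff₀ hB0, mul_comm]
    exact main _
end

section
/- Let K ≥ 2 and 1 ≤ B ≤ K−1, let q be a prime power with K dividing q−1, and let θ_1,…,θ_K be distinct nonzero elements of 𝔽_q. Let Q ∈ 𝔽_q^{K×(K−B)} be the Vandermonde matrix with Q_{i,j} = θ_i^{j−1}, and for g ∈ 𝔽_q let Λ_g ∈ 𝔽_q^{K×K} be the circulant matrix generated by the vector (1, g, g^2, …, g^{B−1}, 0, …, 0). Set φ(K,B) = binom(K,B)·(K−B)·(K−1)·(B−1) + B·K + 2. If q ≥ φ(K,B), then there exists g ∈ 𝔽_q∖{0} with g^K ≠ 1 such that Λ_g is invertible and every (K−B)×(K−B) submatrix of H_g := (Λ_g^T)^{−1} Q is invertible over 𝔽_q. Moreover, if g is drawn uniformly at random from 𝔽_q, the probability that g has these properties is at least 1 − φ(K,B)/q. -/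
/-!
The conditions defining a good `g` are all of the form `P(g) ≠ 0` for explicit polynomials `P`:
`X`, `X ^ K - 1`, `det Λ_X`, and, for every `(K - B)`-subset `S` of the rows, the minor with rows
`S` of `adj(Λ_Xᵀ) * Q`, which differs from the minor of `(Λ_gᵀ)⁻¹ * Q` only by a power of
`det Λ_g` (`goodG_of_eval_ne_zero`). Since `Λ_0 = 1`, the determinant takes the value `1` at
`g = 0`, and the minors specialise there to Vandermonde determinants of distinct `θ_i`; so none of
these polynomials is zero. The entries of `Λ_X` have degree at most `B - 1`, so the entries of the
adjugate have degree at most `(K - 1) (B - 1)`, and the product of all these polynomials has degree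
at most `1 + K + K (B - 1) + C(K, B) (K - B) (K - 1) (B - 1) = φ(K, B) - 1`
(`natDegree_badPoly_le`). A nonzero polynomial has at most as many roots as its degree.
-/


open scoped BigOperators Matrix

/-- The circulant matrix over `𝔽_q` generated by the vector `(1, g, g², …, g^{B−1}, 0, …, 0)`:
its `(i,j)` entry is the `((j − i) mod K)`-th entry (zero-based) of that vector, so each row is
the cyclic right-shift of the previous one, the first row being the generating vector. -/
def cyclicLam (K B : ℕ) {F : Type} [Field F] (g : F) : Matrix (Fin K) (Fin K) F :=
  Matrix.of fun i j => if ((j - i : Fin K) : ℕ) < B then g ^ ((j - i : Fin K) : ℕ) else 0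

/-- The `K × (K−B)` Vandermonde matrix `Q` with `Q_{i,j} = θ_i^{j−1}`. -/
def vandQ (K B : ℕ) {F : Type} [Field F] (θ : Fin K → F) : Matrix (Fin K) (Fin (K - B)) F :=
  Matrix.of fun i j => θ i ^ (j : ℕ)

/-- `φ(K,B) = C(K,B)·(K−B)·(K−1)·(B−1) + B·K + 2`. -/
def phiKB (K B : ℕ) : ℕ :=
  Nat.choose K B * ((K - B) * ((K - 1) * (B - 1))) + B * K + 2

/-- The goodness predicate on `g`: `g ≠ 0`, `g^K ≠ 1`, `Λ_g` is invertible, and every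
`(K−B) × (K−B)` submatrix of `H_g = (Λ_gᵀ)⁻¹ Q` (obtained by selecting any `K−B` of its rows)
is invertible. -/
def goodG (K B : ℕ) {F : Type} [Field F] [Fintype F] [DecidableEq F]
    (θ : Fin K → F) (g : F) : Prop :=
  g ≠ 0 ∧ g ^ K ≠ 1 ∧ IsUnit (cyclicLam K B g) ∧
    ∀ e : Fin (K - B) → Fin K, Function.Injective e →
      IsUnit ((((cyclicLam K B g)ᵀ)⁻¹ * vandQ K B θ).submatrix e id)

open Polynomial

/-- Row-wise degree bound for the determinant of a polynomial matrix. -/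
theorem natDegree_det_le_sum {n : Type*} [Fintype n] [DecidableEq n] {R : Type*} [CommRing R]
    (M : Matrix n n R[X]) (d : n → ℕ) (h : ∀ i j, (M i j).natDegree ≤ d i) :
    M.det.natDegree ≤ ∑ i, d i := by
  rw [Matrix.det_apply]
  refine natDegree_sum_le_of_forall_le _ _ fun σ _ => ?_
  refine (natDegree_smul_le _ _).trans ((natDegree_prod_le _ _).trans ?_)
  rw [← Equiv.sum_comp σ d]
  exact Finset.sum_le_sum fun i _ => h _ _

theorem natDegree_adjugate_le {n : Type*} [Fintype n] [DecidableEq n] {R : Type*} [CommRing R]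
    (M : Matrix n n R[X]) (d : ℕ) (h : ∀ i j, (M i j).natDegree ≤ d) (i j : n) :
    (M.adjugate i j).natDegree ≤ (Fintype.card n - 1) * d := by
  rw [Matrix.adjugate_apply]
  refine (natDegree_det_le_sum _ (fun k => if k = j then 0 else d) ?_).trans ?_
  · intro k l
    by_cases hk : k = j
    · subst hk
      by_cases hl : l = i
      · subst hl; simp
      · simp [hl]
    · simpa [Matrix.updateRow_ne hk, hk] using h k l
  · rw [Finset.sum_ite]
    simp [Finset.filter_ne', Finset.card_erase_of_mem]

/-- The matrix `Λ_X`: the circulant matrix `Λ_g` with the indeterminate in place of `g`. -/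
noncomputable def polyLam (K B : ℕ) (F : Type) [Field F] : Matrix (Fin K) (Fin K) F[X] :=
  Matrix.of fun i j => if ((j - i : Fin K) : ℕ) < B then X ^ ((j - i : Fin K) : ℕ) else 0

/-- The matrix `adj(Λ_Xᵀ) * Q`, which is `det Λ_X • (Λ_Xᵀ)⁻¹ * Q` with denominators cleared. -/
noncomputable def polyH (K B : ℕ) {F : Type} [Field F] (θ : Fin K → F) :
    Matrix (Fin K) (Fin (K - B)) F[X] :=
  (polyLam K B F)ᵀ.adjugate * (vandQ K B θ).map C

theorem polyLam_map_eval (K B : ℕ) {F : Type} [Field F] (g : F) :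
    (polyLam K B F).map (eval g) = cyclicLam K B g := by
  ext i j
  simp only [polyLam, cyclicLam, Matrix.map_apply, Matrix.of_apply]
  split_ifs <;> simp

theorem eval_det_polyLam (K B : ℕ) {F : Type} [Field F] (g : F) :
    eval g (polyLam K B F).det = (cyclicLam K B g).det := by
  rw [← polyLam_map_eval, ← coe_evalRingHom, RingHom.map_det, RingHom.mapMatrix_apply]

theorem polyH_map_eval (K B : ℕ) {F : Type} [Field F] (θ : Fin K → F) (g : F) :
    (polyH K B θ).map (eval g) = (cyclicLam K B g)ᵀ.adjugate * vandQ K B θ := by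
  rw [← polyLam_map_eval, polyH, ← coe_evalRingHom, Matrix.map_mul, ← RingHom.mapMatrix_apply,
    RingHom.map_adjugate]
  congr 1
  ext i j
  simp

theorem eval_minor_polyH (K B : ℕ) {F : Type} [Field F] (θ : Fin K → F) (g : F)
    (e : Fin (K - B) → Fin K) :
    eval g ((polyH K B θ).submatrix e id).det =
      (((cyclicLam K B g)ᵀ.adjugate * vandQ K B θ).submatrix e id).det := by
  rw [← polyH_map_eval, ← coe_evalRingHom, RingHom.map_det, RingHom.mapMatrix_apply,
    Matrix.submatrix_map]

theorem cyclicLam_zero {K B : ℕ} (hB : 1 ≤ B) {F : Type} [Field F] :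
    cyclicLam K B (0 : F) = 1 := by
  ext i j
  have : NeZero K := ⟨by have := i.2; omega⟩
  by_cases h : i = j
  · subst h
    simp [cyclicLam, Nat.lt_of_lt_of_le Nat.zero_lt_one hB]
  · have h0 : ((j - i : Fin K) : ℕ) ≠ 0 := by
      rw [Ne, Fin.val_eq_zero_iff, sub_eq_zero]
      exact fun h' => h h'.symm
    simp [cyclicLam, h0, h]

theorem natDegree_polyLam_le (K B : ℕ) (F : Type) [Field F] (i j : Fin K) :
    (polyLam K B F i j).natDegree ≤ B - 1 := by
  simp only [polyLam, Matrix.of_apply]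
  split_ifs with h
  · rw [natDegree_X_pow]; omega
  · simp

theorem natDegree_minor_polyH_le (K B : ℕ) {F : Type} [Field F] (θ : Fin K → F)
    (e : Fin (K - B) → Fin K) :
    ((polyH K B θ).submatrix e id).det.natDegree ≤ (K - B) * ((K - 1) * (B - 1)) := by
  refine (natDegree_det_le_sum _ (fun _ => (K - 1) * (B - 1)) ?_).trans (by simp)
  intro i j
  simp only [polyH, Matrix.submatrix_apply, Matrix.mul_apply, Matrix.map_apply]
  refine natDegree_sum_le_of_forall_le _ _ fun k _ => (natDegree_mul_C_le _ _).trans ?_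
  have := natDegree_adjugate_le (polyLam K B F)ᵀ (B - 1)
    (fun i j => natDegree_polyLam_le K B F j i) (e i) k
  simpa using this

theorem minor_polyH_ne_zero {K B : ℕ} (hB : 1 ≤ B) {F : Type} [Field F] {θ : Fin K → F}
    (hθ : Function.Injective θ) {e : Fin (K - B) → Fin K} (he : Function.Injective e) :
    ((polyH K B θ).submatrix e id).det ≠ 0 := by
  intro h
  have h0 := eval_minor_polyH K B θ 0 e
  rw [h, cyclicLam_zero hB] at h0
  simp only [eval_zero, Matrix.transpose_one, Matrix.adjugate_one] at h0
  have hv : (vandQ K B θ).submatrix e id = Matrix.vandermonde (θ ∘ e) := by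
    ext i j
    simp [vandQ, Matrix.vandermonde_apply]
  rw [Matrix.one_mul, hv] at h0
  exact Matrix.det_vandermonde_ne_zero_iff.2 (hθ.comp he) h0.symm

/-- The product, over all `(K - B)`-subsets of the rows (each enumerated in increasing order), of
the corresponding minors of `adj(Λ_Xᵀ) * Q`. -/
noncomputable def minorProd (K B : ℕ) {F : Type} [Field F] (θ : Fin K → F) : F[X] :=
  ∏ S : {S : Finset (Fin K) // S.card = K - B},
    ((polyH K B θ).submatrix (S.1.orderEmbOfFin S.2) id).det

/-- A polynomial whose non-roots are all good. -/
noncomputable def badPoly (K B : ℕ) {F : Type} [Field F] (θ : Fin K → F) : F[X] :=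
  X * (X ^ K - 1) * (polyLam K B F).det * minorProd K B θ

theorem badPoly_ne_zero {K B : ℕ} (hK : K ≠ 0) (hB : 1 ≤ B) {F : Type} [Field F] {θ : Fin K → F}
    (hθ : Function.Injective θ) : badPoly K B θ ≠ 0 := by
  refine mul_ne_zero (mul_ne_zero (mul_ne_zero X_ne_zero ?_) ?_) ?_
  · simpa using X_pow_sub_C_ne_zero (Nat.pos_of_ne_zero hK) (1 : F)
  · intro h
    have := eval_det_polyLam K B (0 : F)
    rw [h, cyclicLam_zero hB] at this
    simp at this
  · exact Finset.prod_ne_zero_iff.2 fun S _ =>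
      minor_polyH_ne_zero hB hθ (S.1.orderEmbOfFin S.2).injective

theorem natDegree_badPoly_le {K B : ℕ} (hB : 1 ≤ B) (hBK : B ≤ K) {F : Type} [Field F]
    (θ : Fin K → F) : (badPoly K B θ).natDegree + 1 ≤ phiKB K B := by
  have h1 : (X ^ K - 1 : F[X]).natDegree ≤ K := by
    simpa using (natDegree_X_pow_sub_C (n := K) (r := (1 : F))).le
  have h2 : (polyLam K B F).det.natDegree ≤ K * (B - 1) :=
    (natDegree_det_le_sum _ (fun _ => B - 1) (natDegree_polyLam_le K B F)).trans (by simp)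
  have h3 : (minorProd K B θ).natDegree ≤ Nat.choose K B * ((K - B) * ((K - 1) * (B - 1))) := by
    refine (natDegree_prod_le _ _).trans
      ((Finset.sum_le_card_nsmul _ _ _ fun S _ => natDegree_minor_polyH_le K B θ _).trans ?_)
    rw [Finset.card_univ, Fintype.card_finset_len, Fintype.card_fin, Nat.choose_symm hBK,
      smul_eq_mul]
  have h4 : (badPoly K B θ).natDegree ≤ 1 + (X ^ K - 1 : F[X]).natDegree
      + (polyLam K B F).det.natDegree + (minorProd K B θ).natDegree := by
    refine natDegree_mul_le.trans (Nat.add_le_add_right ?_ _)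
    refine natDegree_mul_le.trans (Nat.add_le_add_right ?_ _)
    exact natDegree_mul_le.trans (Nat.add_le_add_right natDegree_X_le _)
  have h5 : K + K * (B - 1) = B * K := by
    obtain ⟨b, rfl⟩ := Nat.exists_eq_add_of_le hB
    rw [Nat.add_sub_cancel_left]
    ring
  unfold phiKB
  omega

theorem goodG_of_eval_ne_zero {K B : ℕ} {F : Type} [Field F] [Fintype F] [DecidableEq F]
    {θ : Fin K → F} {g : F} (h : eval g (badPoly K B θ) ≠ 0) : goodG K B θ g := by
  simp only [badPoly, minorProd, eval_mul, eval_prod, eval_det_polyLam, eval_X, eval_sub, eval_pow,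
    eval_one, eval_minor_polyH, mul_ne_zero_iff, Finset.prod_ne_zero_iff] at h
  obtain ⟨⟨⟨hg, hgK⟩, hdet⟩, hminor⟩ := h
  refine ⟨hg, sub_ne_zero.1 hgK, (Matrix.isUnit_iff_isUnit_det _).2 hdet.isUnit, fun e he => ?_⟩
  rw [Matrix.isUnit_iff_isUnit_det, isUnit_iff_ne_zero]
  have hS : (Finset.univ.image e).card = K - B := by
    rw [Finset.card_image_of_injective _ he, Finset.card_univ, Fintype.card_fin]
  -- `e` is the increasing enumeration of its image precomposed with a permutation.
  have hmem (i) : ∃ k, (Finset.univ.image e).orderEmbOfFin hS k = e i := by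
    have : e i ∈ Set.range ((Finset.univ.image e).orderEmbOfFin hS) := by
      rw [Finset.range_orderEmbOfFin]; simp
    exact this
  choose σ hσ using hmem
  have hσinj : Function.Injective σ := fun i j hij => he (by rw [← hσ i, ← hσ j, hij])
  let τ : Equiv.Perm (Fin (K - B)) :=
    Equiv.ofBijective σ (Finite.injective_iff_bijective.1 hσinj)
  have hm := hminor ⟨_, hS⟩ (Finset.mem_univ _)
  have hsub : (((cyclicLam K B g)ᵀ)⁻¹ * vandQ K B θ).submatrix e id =
      (Ring.inverse (cyclicLam K B g).det •
        ((cyclicLam K B g)ᵀ.adjugate * vandQ K B θ).submatrix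
          ((Finset.univ.image e).orderEmbOfFin hS) id).submatrix τ id := by
    ext i j
    simp [Matrix.inv_def, τ, hσ]
  rw [hsub, Matrix.det_permute, Matrix.det_smul]
  refine mul_ne_zero ?_ (mul_ne_zero (pow_ne_zero _ ?_) hm)
  · rcases Int.units_eq_one_or (Equiv.Perm.sign τ) with h | h <;> simp [h]
  · simpa using hdet

/-- paper's Lemma 1: let `2 ≤ K`, `1 ≤ B ≤ K−1`, let `𝔽_q` be a finite
field with `K ∣ q − 1`, and let `θ_1, …, θ_K` be distinct nonzero elements of `𝔽_q`. If
`q ≥ φ(K,B)` then there is a valid `g` (nonzero, `g^K ≠ 1`, `Λ_g` invertible, and all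
`(K−B)×(K−B)` row-submatrices of `H_g = (Λ_gᵀ)⁻¹ Q` invertible); moreover a uniformly random
`g ∈ 𝔽_q` is valid with probability at least `1 − φ(K,B)/q`. -/
theorem exists_good_g (K B : ℕ) (hK : 2 ≤ K) (hB1 : 1 ≤ B) (hBK : B ≤ K - 1)
    (F : Type) [Field F] [Fintype F] [DecidableEq F]
    (hdiv : K ∣ Fintype.card F - 1)
    (θ : Fin K → F) (hθinj : Function.Injective θ) (hθ0 : ∀ i, θ i ≠ 0)
    (hq : phiKB K B ≤ Fintype.card F) :
    (∃ g : F, goodG K B θ g) ∧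
      (Nat.card {g : F // goodG K B θ g} : ℝ) / (Fintype.card F : ℝ)
        ≥ 1 - (phiKB K B : ℝ) / (Fintype.card F : ℝ) := by
  have hbad := natDegree_badPoly_le hB1 (by omega : B ≤ K) θ
  have hne := badPoly_ne_zero (by omega : K ≠ 0) hB1 hθinj
  have hcount : Fintype.card F ≤ Nat.card {g : F // goodG K B θ g} + (badPoly K B θ).natDegree := by
    classical
    have hsub : (Finset.univ : Finset F) ⊆
        Finset.univ.filter (goodG K B θ) ∪ (badPoly K B θ).roots.toFinset := by
      intro g _
      by_cases h : eval g (badPoly K B θ) = 0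
      · exact Finset.mem_union_right _ (by simpa [hne] using h)
      · exact Finset.mem_union_left _ (by simpa using goodG_of_eval_ne_zero h)
    have hroots := (Multiset.toFinset_card_le (badPoly K B θ).roots).trans (card_roots' _)
    have hle := (Finset.card_le_card hsub).trans (Finset.card_union_le _ _)
    have hc : Nat.card {g : F // goodG K B θ g} = (Finset.univ.filter (goodG K B θ)).card :=
      Nat.subtype_card _ (by simp)
    rw [Finset.card_univ] at hle
    omega
  constructor
  · have hpos : 0 < Nat.card {g : F // goodG K B θ g} := by omega
    obtain ⟨⟨g, hg⟩⟩ := (Nat.card_pos_iff.1 hpos).1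
    exact ⟨g, hg⟩
  · have hF : (0 : ℝ) < Fintype.card F := by exact_mod_cast Fintype.card_pos
    have h : (Fintype.card F : ℝ) ≤ Nat.card {g : F // goodG K B θ g} + phiKB K B := by
      exact_mod_cast (by omega :
        Fintype.card F ≤ Nat.card {g : F // goodG K B θ g} + phiKB K B)
    rw [ge_iff_le, one_sub_div hF.ne']
    gcongr
    linarith
end

section
/- Achievability part of Theorem 1 for B ≤ K−1: for every K ≥ 2 and every B with 1 ≤ B ≤ K−1 there exists a prime power q₀ such that for all prime powers q ≥ q₀ there exist, on some finite probability space, random variables W_1,…,W_K, Z_Σ, Z_1,…,Z_K, {X_{k,i}}_{k∈{1,…,K}, i∈B_k}, {Y_i}_{i∈{1,…,K}} satisfying all conditions of the cyclic hierarchical secure aggregation model with input length L = B, together with the source-key condition, relay security, and server security, and in which each X_{k,i} takes values in 𝔽_q, each Y_i takes values in 𝔽_q, each Z_k takes values in 𝔽_q, and Z_Σ is uniform on 𝔽_q^{max{B, K−B}}. Consequently the rate tuple (R_X, R_Y, R_Z, R_{Z_Σ}) = (1, 1/B, 1/B, max{1, K/B − 1}) is achievable. -/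
/-!
The protocol is linear. User `k` sends `(a_k w_k)_i + c_{k,i} z_k` to relay `i`, where `w_k` is its
input and `z_k` a single key symbol; each relay adds what it receives, so the server sees
`∑ k, a_k w_k` plus the mask `(∑ k, c_{k,i} z_k)_i`, and applies a linear decoder `D`. For uniform
inputs and a uniform source key, every variable is a linear image of a uniform vector, and its
entropy is the dimension of that image (`ent_unif_surj`). Security is therefore a matter of linear
algebra (`LinearScheme`): the server learns only the sum if the masks fill `ker D`, and a relay
learns nothing if the keys of its users are unconstrained and the relevant `c_{k,i}` are nonzero.

To find such data, fix distinct points `α_i` and put `r = K - B`, `s = min r B`.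

* `D` has as kernel the Reed–Solomon code of evaluations at the `α_i` of polynomials of degree less
  than `r` (`exists_decoder`). Since `r` values can be interpolated by such a polynomial, a right
  inverse of `D` can be corrected so that it vanishes on the `r` relays not linked to user `k`; this
  is `a_k`.
* `c_{k,i} = f_k(α_i)`, where `f_k` has degree less than `r + s`, vanishes on the same `r` relays,
  and has `1, γ_k, …, γ_k ^ (s - 1)` as its top `s` coefficients.
* The mask lies in `ker D` exactly when the top `s` coefficients of `∑ k, z_k f_k` vanish, that is,
  when `∑ k, z_k γ_k ^ j = 0` for `j < s`. The key vector ranges over the solutions, a space of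
  dimension `K - s = max B (K - B)`, parametrized by the source key.

For distinct `γ_k`, the Vandermonde determinant lets the at least `K - B ≥ s` users not linked to a
given relay compensate any choice of keys of the others (`exists_moment_eq`). The masks fill `ker D`
because the `f_k` span all polynomials of degree less than `r + s`; this holds for generic `γ`. In
fact some polynomials vanishing on the prescribed relays form a triangular system, the cyclic
windows being intervals (`card_compl_union_Iio_le`), and exchanging them for the `f_k` one at a time
excludes few values of each `γ_k` (`exists_generic_rows`).
-/

open scoped BigOperators

/-- The cyclic hierarchical secure aggregation model with `K` users/relays, association
number `B`, input length `L`, inputs in `𝔽_q^L` (`F = 𝔽_q`), keys valued in `ζ`, user-to-relay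
messages valued in `χ`, relay-to-server messages valued in `υ`, and source key valued in `σ`,
including the source-key condition, relay security and server security. Entropies are in
`q`-ary units. -/
structure HSAModel (K B L : ℕ) (F : Type) [Field F] [Fintype F] [DecidableEq F]
    (ζ χ υ σ : Type) [Fintype ζ] [DecidableEq ζ] [Fintype χ] [DecidableEq χ]
    [Fintype υ] [DecidableEq υ] [Fintype σ] [DecidableEq σ] : Type 1 where
  Ω : Type
  [fintΩ : Fintype Ω]
  p : Ω → ℝ
  W : Fin K → Ω → (Fin L → F)
  Z : Fin K → Ω → ζ
  Xm : Fin K → Fin K → Ω → χ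
  Y : Fin K → Ω → υ
  Zsig : Ω → σ
  hp : IsPMF p
  -- the inputs are i.i.d. uniform on 𝔽_q^L
  hW : ∀ w : Fin K → Fin L → F,
    pr p (fun ω => fun k => W k ω) w = 1 / (Fintype.card F : ℝ) ^ (K * L)
  -- the inputs are independent of the keys
  hWZ : IndepRV p (fun ω => fun k => W k ω) (fun ω => fun k => Z k ω)
  -- user messages are functions of the user's input and key
  hX : ∀ k : Fin K, condEnt (Fintype.card F) p
    (fun ω => fun i : {i // i ∈ Bset K B k} => Xm k i.1 ω) (fun ω => (W k ω, Z k ω)) = 0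
  -- relay messages are functions of the received messages
  hY : ∀ i : Fin K, condEnt (Fintype.card F) p (Y i)
    (fun ω => fun k : {k // k ∈ Uset K B i} => Xm k.1 i ω) = 0
  -- the server recovers the sum of the inputs
  hRec : condEnt (Fintype.card F) p (fun ω => ∑ k, W k ω) (fun ω => fun i => Y i ω) = 0
  -- all individual keys are generated from the source key
  hZsig : condEnt (Fintype.card F) p (fun ω => fun k => Z k ω) Zsig = 0
  -- relay security
  hRelaySec : ∀ i : Fin K, mutInfo (Fintype.card F) p
    (fun ω => fun k : {k // k ∈ Uset K B i} => Xm k.1 i ω) (fun ω => fun k => W k ω) = 0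
  -- server security
  hServerSec : condMutInfo (Fintype.card F) p (fun ω => fun i => Y i ω)
    (fun ω => fun k => W k ω) (fun ω => ∑ k, W k ω) = 0

attribute [instance] HSAModel.fintΩ

/-! ### Entropy of linear images of uniform vectors -/

theorem pr_comp_inj {Ω α β : Type} [Fintype Ω] [DecidableEq α] [DecidableEq β]
    (p : Ω → ℝ) (X : Ω → α) {ι : α → β} (hι : Function.Injective ι) (a : α) :
    pr p (fun ω => ι (X ω)) (ι a) = pr p X a := by
  simp [pr, hι.eq_iff]

theorem ent_comp_inj {Ω α β : Type} [Fintype Ω] [Fintype α] [DecidableEq α] [Fintype β]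
    [DecidableEq β] (q : ℕ) (p : Ω → ℝ) (X : Ω → α) {ι : α → β} (hι : Function.Injective ι) :
    ent q p (fun ω => ι (X ω)) = ent q p X := by
  unfold ent
  congr 1
  symm
  refine Finset.sum_of_injOn ι hι.injOn (by simp [Set.MapsTo]) ?_ ?_
  · intro b _ hb
    have h0 : pr p (fun ω => ι (X ω)) b = 0 := by
      refine Finset.sum_eq_zero fun ω _ => if_neg fun h => hb ?_
      exact ⟨X ω, by simp, h⟩
    simp [h0]
  · intro a _
    rw [pr_comp_inj p X hι]

/-- A deterministic function has zero conditional entropy, for any weights `p`. -/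
theorem condEnt_of_fun {Ω α β : Type} [Fintype Ω] [Fintype α] [DecidableEq α] [Fintype β]
    [DecidableEq β] (q : ℕ) (p : Ω → ℝ) (X : Ω → α) (Y : Ω → β) (f : β → α)
    (h : ∀ ω, X ω = f (Y ω)) : condEnt q p X Y = 0 := by
  have h1 : (fun ω => (X ω, Y ω)) = fun ω => (fun y => (f y, y)) (Y ω) := by
    funext ω; simp [h]
  rw [condEnt, h1, ent_comp_inj q p Y (ι := fun y => (f y, y)) (fun a b hab => by
    simpa using congrArg Prod.snd hab), sub_self]

/-- The uniform weights on a finite type. -/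
noncomputable def unif (Ω : Type) [Fintype Ω] : Ω → ℝ := fun _ => 1 / (Fintype.card Ω : ℝ)

theorem isPMF_unif (Ω : Type) [Fintype Ω] [Nonempty Ω] : IsPMF (unif Ω) := by
  refine ⟨fun _ => by unfold unif; positivity, ?_⟩
  simp [unif]

/-- A surjective linear map sends the uniform distribution to the uniform distribution: its
fibres are cosets of the kernel. -/
theorem pr_unif_surj {F V A : Type} [Field F] [AddCommGroup V] [Module F V] [AddCommGroup A]
    [Module F A] [Fintype V] [Fintype A] [DecidableEq A] (φ : V →ₗ[F] A)
    (hφ : Function.Surjective φ) (a : A) :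
    pr (unif V) (fun v => φ v) a = 1 / (Fintype.card A : ℝ) := by
  classical
  have hfib : ∀ b : A, (Finset.univ.filter fun v => φ v = b).card
      = (Finset.univ.filter fun v => φ v = a).card := fun b =>
    AddMonoidHom.card_fiber_eq_of_mem_range φ.toAddMonoidHom (hφ b) (hφ a)
  have hcard : Fintype.card V
      = Fintype.card A * (Finset.univ.filter fun v => φ v = a).card := by
    have := Finset.card_eq_sum_card_fiberwise (s := (Finset.univ : Finset V))
      (t := (Finset.univ : Finset A)) (f := fun v => φ v) (by simp [Set.MapsTo])
    rw [Finset.sum_congr rfl (fun b _ => hfib b)] at this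
    simpa using this
  have hV : (Fintype.card V : ℝ) ≠ 0 := by
    exact_mod_cast Fintype.card_ne_zero
  have hA : (Fintype.card A : ℝ) ≠ 0 := by
    exact_mod_cast Fintype.card_ne_zero
  have h2 : pr (unif V) (fun v => φ v) a
      = (Finset.univ.filter fun v => φ v = a).card * (1 / (Fintype.card V : ℝ)) := by
    simp [pr, unif, ← Finset.sum_filter]
  rw [h2]
  have hc' : (Fintype.card V : ℝ)
      = Fintype.card A * (Finset.univ.filter fun v => φ v = a).card := by exact_mod_cast hcard
  field_simp
  linarith

/-- In `|F|`-ary units, the entropy of a surjective linear image of a uniform vector is the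
dimension of the target. -/
theorem ent_unif_surj {F V A : Type} [Field F] [Fintype F] [AddCommGroup V] [Module F V]
    [AddCommGroup A] [Module F A] [Fintype V] [Fintype A] [DecidableEq A] (φ : V →ₗ[F] A)
    (hφ : Function.Surjective φ) :
    ent (Fintype.card F) (unif V) (fun v => φ v) = Module.finrank F A := by
  have hq : (1 : ℝ) < Fintype.card F := by exact_mod_cast Fintype.one_lt_card
  have hA : (Fintype.card A : ℝ) ≠ 0 := by
    exact_mod_cast Fintype.card_ne_zero
  unfold ent
  simp_rw [pr_unif_surj φ hφ]
  have hc : (Fintype.card A : ℝ) = (Fintype.card F : ℝ) ^ Module.finrank F A := by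
    exact_mod_cast Module.card_eq_pow_finrank (K := F) (V := A)
  rw [Finset.sum_const, Finset.card_univ, nsmul_eq_mul, one_div, Real.logb_inv, ← mul_assoc,
    mul_inv_cancel₀ hA, hc, Real.logb_pow, Real.logb_self_eq_one hq]
  ring

/-- Version of `ent_unif_surj` for a variable that is an injective function of a surjective
linear map. -/
theorem ent_unif_of_factor {F V A β : Type} [Field F] [Fintype F] [AddCommGroup V] [Module F V]
    [AddCommGroup A] [Module F A] [Fintype V] [Fintype A] [Fintype β]
    [DecidableEq β] (X : V → β) (φ : V →ₗ[F] A) (hφ : Function.Surjective φ) (ι : A → β)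
    (hι : Function.Injective ι) (h : ∀ v, X v = ι (φ v)) :
    ent (Fintype.card F) (unif V) X = Module.finrank F A := by
  classical
  rw [show X = fun v => ι (φ v) from funext h, ent_comp_inj _ _ _ hι, ent_unif_surj φ hφ]

theorem indep_fst_snd {S T γ : Type} [Fintype S] [Fintype T] [Nonempty S] [Nonempty T]
    [DecidableEq S] [DecidableEq γ] (g : T → γ) :
    IndepRV (unif (S × T)) (fun ω => ω.1) (fun ω => g ω.2) := by
  intro a b
  have hS : (Fintype.card S : ℝ) ≠ 0 := by exact_mod_cast Fintype.card_ne_zero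
  have hT : (Fintype.card T : ℝ) ≠ 0 := by exact_mod_cast Fintype.card_ne_zero
  have hc : ∀ P : S × T → Prop, ∀ _ : DecidablePred P,
      (∑ ω, if P ω then unif (S × T) ω else 0)
        = (Finset.univ.filter P).card * (1 / (Fintype.card S * Fintype.card T)) := by
    intro P _
    simp [unif, ← Finset.sum_filter]
  have e1 : (Finset.univ.filter fun ω : S × T => (ω.1, g ω.2) = (a, b))
      = {a} ×ˢ (Finset.univ.filter fun t => g t = b) := by
    ext ⟨x, y⟩; simp [and_comm, eq_comm]
  have e2 : (Finset.univ.filter fun ω : S × T => ω.1 = a) = {a} ×ˢ Finset.univ := by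
    ext ⟨x, y⟩; simp [eq_comm]
  have e3 : (Finset.univ.filter fun ω : S × T => g ω.2 = b)
      = Finset.univ ×ˢ (Finset.univ.filter fun t => g t = b) := by
    ext ⟨x, y⟩; simp
  unfold pr
  rw [hc, hc, hc, e1, e2, e3]
  simp only [Finset.card_product, Finset.card_singleton, Finset.card_univ]
  push_cast
  field_simp

/-! ### Linear schemes and their security -/

/-- Linear coding data from which a secure protocol is built. User `k` sends
`(a k w)_i + c k i * (G s)_k` to relay `i`, where `w` is its input and `s` the source key; the
relays add what they receive, and the server applies `D`. -/
structure LinearScheme (K B m : ℕ) (F : Type) [Field F] where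
  /-- the decoder -/
  D : (Fin K → F) →ₗ[F] (Fin B → F)
  /-- the input encoders -/
  a : Fin K → (Fin B → F) →ₗ[F] (Fin K → F)
  /-- the coefficients of the keys -/
  c : Fin K → Fin K → F
  /-- the generator of the individual keys -/
  G : (Fin m → F) →ₗ[F] (Fin K → F)
  /-- users only write to their own relays -/
  a_supp : ∀ k v i, i ∉ Bset K B k → a k v i = 0
  c_supp : ∀ k i, i ∉ Bset K B k → c k i = 0
  c_ne : ∀ k i, i ∈ Bset K B k → c k i ≠ 0
  /-- the decoder inverts every encoder, hence adds up the inputs -/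
  D_a : ∀ k v, D (a k v) = v
  /-- the decoder annihilates the masks -/
  D_mask : ∀ s, D (fun i => ∑ k, c k i * G s k) = 0
  /-- the masks fill the kernel of the decoder -/
  exists_mask : ∀ u, D u = 0 → ∃ s, (fun i => ∑ k, c k i * G s k) = u
  /-- the keys of the users at one relay are unconstrained -/
  exists_key : ∀ i (z : Fin K → F), ∃ s, ∀ k ∈ Uset K B i, G s k = z k

namespace LinearScheme

variable {K B m : ℕ} {F : Type} [Field F]

/-- The message from user `k` to relay `i`, as a linear map of inputs and source key. -/
def msg (S : LinearScheme K B m F) (k i : Fin K) :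
    ((Fin K → Fin B → F) × (Fin m → F)) →ₗ[F] F where
  toFun ω := S.a k (ω.1 k) i + S.c k i * S.G ω.2 k
  map_add' x y := by simp; ring
  map_smul' t x := by simp; ring

/-- The vector of all relay messages. -/
def relay (S : LinearScheme K B m F) :
    ((Fin K → Fin B → F) × (Fin m → F)) →ₗ[F] (Fin K → F) :=
  LinearMap.pi fun i => ∑ k, S.msg k i

/-- The contribution of the keys to the vector of all relay messages. -/
def mask (S : LinearScheme K B m F) : (Fin m → F) →ₗ[F] (Fin K → F) where
  toFun s := fun i => ∑ k, S.c k i * S.G s k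
  map_add' x y := by ext i; simp [mul_add, Finset.sum_add_distrib]
  map_smul' t x := by
    ext i
    simp only [map_smul, Pi.smul_apply, smul_eq_mul, RingHom.id_apply, Finset.mul_sum]
    exact Finset.sum_congr rfl fun k _ => by ring

variable (S : LinearScheme K B m F)

theorem relay_eq (ω : (Fin K → Fin B → F) × (Fin m → F)) :
    S.relay ω = ∑ k, S.a k (ω.1 k) + S.mask ω.2 := by
  ext i
  simp [relay, msg, mask, Finset.sum_add_distrib]

theorem D_relay (ω : (Fin K → Fin B → F) × (Fin m → F)) : S.D (S.relay ω) = ∑ k, ω.1 k := by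
  have h : S.D (S.mask ω.2) = 0 := S.D_mask ω.2
  rw [relay_eq, map_add, h, map_sum, add_zero]
  exact Finset.sum_congr rfl fun k _ => S.D_a k _

theorem msg_eq_zero {k i : Fin K} (h : k ∉ Uset K B i)
    (ω : (Fin K → Fin B → F) × (Fin m → F)) : S.msg k i ω = 0 := by
  have h' : i ∉ Bset K B k := by simpa [Uset] using h
  simp [msg, S.a_supp k _ i h', S.c_supp k i h']

theorem relay_apply (ω : (Fin K → Fin B → F) × (Fin m → F)) (i : Fin K) :
    S.relay ω i = ∑ k : {k // k ∈ Uset K B i}, S.msg k.1 i ω := by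
  have h1 : S.relay ω i = ∑ k, S.msg k i ω := by simp [relay]
  rw [h1, Finset.sum_coe_sort (Uset K B i) (fun k => S.msg k i ω)]
  exact (Finset.sum_subset (Finset.subset_univ _) fun k _ hk => S.msg_eq_zero hk ω).symm

theorem relay_surjective (hK : 0 < K) : Function.Surjective S.relay := by
  intro y
  obtain ⟨s, hs⟩ := S.exists_mask (y - S.a ⟨0, hK⟩ (S.D y)) (by rw [map_sub, S.D_a, sub_self])
  refine ⟨(Pi.single ⟨0, hK⟩ (S.D y), s), ?_⟩
  have hs' : S.mask s = y - S.a ⟨0, hK⟩ (S.D y) := hs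
  rw [relay_eq, hs', Finset.sum_eq_single ⟨0, hK⟩]
  · simp
  · intro k _ hk
    simp [Pi.single_eq_of_ne hk]
  · simp

/-- What relay `i` receives. -/
def received (i : Fin K) :
    ((Fin K → Fin B → F) × (Fin m → F)) →ₗ[F] ({k // k ∈ Uset K B i} → F) :=
  LinearMap.pi fun k => S.msg k.1 i

/-- Whatever the inputs are, the keys can produce any tuple of messages at a relay. -/
theorem exists_received (i : Fin K) (x : {k // k ∈ Uset K B i} → F) (w : Fin K → Fin B → F) :
    ∃ s, S.received i (w, s) = x := by
  classical
  obtain ⟨s, hs⟩ := S.exists_key i fun k =>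
    if h : k ∈ Uset K B i then (x ⟨k, h⟩ - S.a k (w k) i) / S.c k i else 0
  refine ⟨s, ?_⟩
  ext ⟨k, hk⟩
  have hne : S.c k i ≠ 0 := S.c_ne k i (by simpa [Uset] using hk)
  simp only [received, LinearMap.pi_apply, msg, LinearMap.coe_mk, AddHom.coe_mk, hs k hk,
    dif_pos hk]
  field_simp
  ring

/-- The image of the masks is the kernel of the decoder. -/
def maskKer : (Fin m → F) →ₗ[F] LinearMap.ker S.D :=
  S.mask.codRestrict _ fun s => S.D_mask s

theorem maskKer_surjective : Function.Surjective S.maskKer := by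
  rintro ⟨u, hu⟩
  obtain ⟨s, hs⟩ := S.exists_mask u hu
  exact ⟨s, Subtype.ext hs⟩

theorem finrank_ker_D (hK : 0 < K) : Module.finrank F (LinearMap.ker S.D) + B = K := by
  have hs : Function.Surjective S.D := fun v => ⟨S.a ⟨0, hK⟩ v, S.D_a _ v⟩
  have := S.D.finrank_range_add_finrank_ker
  rw [LinearMap.range_eq_top.2 hs] at this
  simp at this
  omega

variable [Fintype F] [DecidableEq F]

/-- The vector of relay messages is uniform on `F ^ K`, and given the inputs it is uniform on a
coset of `ker D`, of dimension `K - B`: it reveals `B` symbols, those of the sum. -/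
theorem server_secure (hK : 0 < K) :
    condMutInfo (Fintype.card F) (unif ((Fin K → Fin B → F) × (Fin m → F)))
      (fun ω => S.relay ω) (fun ω => ω.1) (fun ω => ∑ k, ω.1 k) = 0 := by
  classical
  have hY := ent_unif_of_factor (fun ω => (S.relay ω, ∑ k, ω.1 k)) S.relay
    (S.relay_surjective hK) (fun y => (y, S.D y)) (fun y y' h => congrArg Prod.fst h)
    (fun ω => by rw [S.D_relay])
  have hW := ent_unif_of_factor
    (fun ω : (Fin K → Fin B → F) × (Fin m → F) => (ω.1, ∑ k, ω.1 k)) (LinearMap.fst F _ _)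
    LinearMap.fst_surjective (fun w => (w, ∑ k, w k)) (fun y y' h => congrArg Prod.fst h)
    (fun ω => rfl)
  have hSum := ent_unif_surj
    (S.D.comp S.relay) (fun v => by
      obtain ⟨ω, hω⟩ := S.relay_surjective hK (S.a ⟨0, hK⟩ v)
      exact ⟨ω, by simp [hω, S.D_a]⟩)
  have hSum' : (fun ω => (S.D.comp S.relay) ω) = fun ω => ∑ k, ω.1 k :=
    funext fun ω => S.D_relay ω
  rw [hSum'] at hSum
  -- Given the inputs, the relay messages are determined by the mask, uniform on `ker D`.
  have hJ := ent_unif_of_factor (fun ω => ((S.relay ω, ω.1), ∑ k, ω.1 k))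
    (LinearMap.prodMap (LinearMap.id (M := Fin K → Fin B → F)) S.maskKer)
    (Function.Surjective.prodMap Function.surjective_id S.maskKer_surjective)
    (fun z => ((∑ k, S.a k (z.1 k) + z.2.1, z.1), ∑ k, z.1 k))
    (by
      rintro ⟨w, u⟩ ⟨w', u'⟩ h
      simp only [Prod.mk.injEq] at h
      obtain ⟨⟨h1, rfl⟩, -⟩ := h
      simpa using h1)
    (fun ω => by rw [relay_eq]; rfl)
  have hd := S.finrank_ker_D hK
  have hd' : (Module.finrank F (LinearMap.ker S.D) : ℝ) + B = K := by exact_mod_cast hd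
  unfold condMutInfo condEnt
  rw [hY, hW, hSum, hJ]
  simp
  linarith

/-- Messages received by a relay and inputs are jointly uniform. -/
theorem relay_secure (i : Fin K) :
    mutInfo (Fintype.card F) (unif ((Fin K → Fin B → F) × (Fin m → F)))
      (fun ω => fun k : {k // k ∈ Uset K B i} => S.msg k.1 i ω) (fun ω => ω.1) = 0 := by
  classical
  have hX := ent_unif_surj (S.received i) (fun x => by
    obtain ⟨s, hs⟩ := S.exists_received i x 0
    exact ⟨_, hs⟩)
  have hW := ent_unif_surj (LinearMap.fst F (Fin K → Fin B → F) (Fin m → F))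
    LinearMap.fst_surjective
  have hJ := ent_unif_surj ((S.received i).prod (LinearMap.fst F _ _)) (fun z => by
    obtain ⟨s, hs⟩ := S.exists_received i z.1 z.2
    exact ⟨(z.2, s), Prod.ext hs rfl⟩)
  rw [Module.finrank_prod] at hJ
  push_cast at hJ
  have key : ∀ x y z a b : ℝ, x = a → y = b → z = a + b → x + y - z = 0 := by
    intro x y z a b h1 h2 h3
    rw [h1, h2, h3, sub_self]
  exact key _ _ _ _ _ hX hW hJ

/-- The protocol defined by a linear scheme, with uniform inputs and uniform source key. -/
noncomputable def toModel (hK : 0 < K) : HSAModel K B B F F F F (Fin m → F) where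
  Ω := (Fin K → Fin B → F) × (Fin m → F)
  p := unif _
  W k ω := ω.1 k
  Z k ω := S.G ω.2 k
  Xm k i ω := S.msg k i ω
  Y i ω := S.relay ω i
  Zsig ω := ω.2
  hp := isPMF_unif _
  hW w := by
    have := pr_unif_surj (LinearMap.fst F (Fin K → Fin B → F) (Fin m → F))
      LinearMap.fst_surjective w
    refine this.trans ?_
    simp [← pow_mul, mul_comm]
  hWZ := indep_fst_snd (fun s => S.G s)
  hX k := condEnt_of_fun _ _ _ _
    (fun wz => fun i : {i // i ∈ Bset K B k} => S.a k wz.1 i.1 + S.c k i.1 * wz.2)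
    fun ω => rfl
  hY i := condEnt_of_fun _ _ _ _ (fun x => ∑ k, x k) fun ω => S.relay_apply ω i
  hRec := condEnt_of_fun _ _ _ _ (fun y => S.D y) fun ω => (S.D_relay ω).symm
  hZsig := condEnt_of_fun _ _ _ _ (fun s => fun k => S.G s k) fun ω => rfl
  hRelaySec i := S.relay_secure i
  hServerSec := S.server_secure hK

theorem toModel_Zsig (hK : 0 < K) (s : Fin m → F) :
    pr (S.toModel hK).p (S.toModel hK).Zsig s = 1 / (Fintype.card F : ℝ) ^ m := by
  have := pr_unif_surj (LinearMap.snd F (Fin K → Fin B → F) (Fin m → F))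
    LinearMap.snd_surjective s
  refine this.trans ?_
  simp

end LinearScheme

/-! ### The cyclic association -/

theorem mem_Bset {K B : ℕ} {k i : Fin K} :
    i ∈ Bset K B k ↔ ∃ j < B, ((k : ℕ) + j) % K = i := by
  simp [Bset, Fin.ext_iff]

theorem add_mod_cases {K k j : ℕ} (hk : k < K) (hj : j < K) :
    (k + j < K ∧ (k + j) % K = k + j) ∨ (K ≤ k + j ∧ (k + j) % K = k + j - K) := by
  rcases lt_or_ge (k + j) K with h | h
  · exact Or.inl ⟨h, Nat.mod_eq_of_lt h⟩
  · exact Or.inr ⟨h, by rw [Nat.mod_eq_sub_mod h, Nat.mod_eq_of_lt (by omega)]⟩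

theorem self_mem_Bset {K B : ℕ} (hB : 1 ≤ B) (k : Fin K) : k ∈ Bset K B k :=
  mem_Bset.2 ⟨0, hB, by simp [Nat.mod_eq_of_lt k.2]⟩

theorem card_Bset {K B : ℕ} (hB : B < K) (k : Fin K) : (Bset K B k).card = B := by
  rw [Bset, Finset.card_image_of_injOn, Finset.card_range]
  intro x hx y hy h
  have hx' : x < B := by simpa using hx
  have hy' : y < B := by simpa using hy
  have h' : ((k : ℕ) + x) % K = ((k : ℕ) + y) % K := congrArg Fin.val h
  have hk := k.2
  rcases add_mod_cases hk (hx'.trans hB) with h1 | h1 <;>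
    rcases add_mod_cases hk (hy'.trans hB) with h2 | h2 <;> omega

theorem card_compl_Bset {K B : ℕ} (hB : B < K) (k : Fin K) : (Bset K B k)ᶜ.card = K - B := by
  rw [Finset.card_compl, card_Bset hB, Fintype.card_fin]

theorem card_Uset_le {K B : ℕ} (hB : B < K) (i : Fin K) : (Uset K B i).card ≤ B := by
  have hsub : Uset K B i ⊆
      (Finset.range B).image fun j => ⟨((i : ℕ) + (K - j)) % K, Nat.mod_lt _ i.pos⟩ := by
    intro k hk
    obtain ⟨j, hj, h⟩ := mem_Bset.1 (by simpa [Uset] using hk : i ∈ Bset K B k)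
    refine Finset.mem_image.2 ⟨j, Finset.mem_range.2 hj, Fin.ext ?_⟩
    have hk := k.2
    have hi := i.2
    change ((i : ℕ) + (K - j)) % K = k
    rcases add_mod_cases hk (hj.trans hB) with h1 | h1
    · rw [show (i : ℕ) + (K - j) = k + K by omega, Nat.add_mod_right, Nat.mod_eq_of_lt hk]
    · rw [show (i : ℕ) + (K - j) = k by omega, Nat.mod_eq_of_lt hk]
  exact (Finset.card_le_card hsub).trans (Finset.card_image_le.trans (by simp))

/-- The relays not seen by user `k` are the `K - B` cyclic predecessors of `k`, so together with
`0, …, k - 1` they make up at most `max k (K - B)` relays. -/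
theorem card_compl_union_Iio_le {K B : ℕ} (hB : B < K) (k : Fin K) :
    ((Bset K B k)ᶜ ∪ Finset.Iio k).card ≤ max (k : ℕ) (K - B) := by
  rcases le_total (k : ℕ) (K - B) with h | h
  · have hsub : Finset.Iio k ⊆ (Bset K B k)ᶜ := by
      intro j hj
      have hj' : (j : ℕ) < k := Fin.lt_def.1 (Finset.mem_Iio.1 hj)
      rw [Finset.mem_compl, mem_Bset]
      rintro ⟨d, hd, hd'⟩
      rcases add_mod_cases k.2 (hd.trans hB) with h1 | h1 <;> omega
    rw [Finset.union_eq_left.2 hsub, card_compl_Bset hB]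
    exact le_max_right _ _
  · have hsub : (Bset K B k)ᶜ ⊆ Finset.Iio k := by
      intro j hj
      rw [Finset.mem_compl, mem_Bset] at hj
      by_contra hjk
      have hjk' : (k : ℕ) ≤ j := not_lt.1 fun h => hjk (Finset.mem_Iio.2 h)
      have hk := k.2
      have hj2 := j.2
      exact hj ⟨j - k, by omega, by
        rw [show (k : ℕ) + (j - k) = j by omega, Nat.mod_eq_of_lt hj2]⟩
    rw [Finset.union_eq_right.2 hsub, Fin.card_Iio]
    exact le_max_left _ _

/-! ### Genericity, moments and polynomials -/

section Algebra

variable {F : Type} [Field F]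

/-- A nonzero polynomial, given by its coefficients, has few roots. -/
theorem exists_small_rootset [DecidableEq F] {s : ℕ} (c : Fin s → F) (hc : c ≠ 0) :
    ∃ A : Finset F, A.card ≤ s ∧ ∀ γ ∉ A, ∑ j : Fin s, γ ^ (j : ℕ) * c j ≠ 0 := by
  set P : Polynomial F := ∑ j : Fin s, Polynomial.C (c j) * Polynomial.X ^ (j : ℕ) with hP
  have hcoeff : ∀ j : Fin s, P.coeff j = c j := by
    intro j
    simp [hP, Polynomial.finsetSum_coeff, Polynomial.coeff_C_mul, Polynomial.coeff_X_pow,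
      Fin.val_inj]
  have hP0 : P ≠ 0 := by
    intro h
    exact hc (funext fun j => by rw [← hcoeff, h]; simp)
  have hdeg : P.natDegree ≤ s := by
    refine Polynomial.natDegree_sum_le_of_forall_le _ _ fun j _ => ?_
    exact (Polynomial.natDegree_C_mul_X_pow_le _ _).trans j.2.le
  refine ⟨P.roots.toFinset, ?_, fun γ hγ h => hγ ?_⟩
  · exact (Multiset.toFinset_card_le _).trans ((Polynomial.card_roots' P).trans hdeg)
  · rw [Multiset.mem_toFinset, Polynomial.mem_roots hP0, Polynomial.IsRoot.def, ← h]
    rw [hP, Polynomial.eval_finsetSum]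
    refine Finset.sum_congr rfl fun j _ => ?_
    rw [Polynomial.eval_mul, Polynomial.eval_C, Polynomial.eval_pow, Polynomial.eval_X, mul_comm]

/-- Genericity by exchanging one row at a time: if each row of an invertible matrix `M₀` is a
combination of vectors `R k j`, then for suitable distinct parameters `γ k`, each avoiding a small
set `bad k`, the matrix with rows `∑ j, γ k ^ j • R k j` is invertible. -/
theorem exists_generic_rows [Fintype F] [DecidableEq F] {K s N : ℕ}
    (R : Fin K → Fin s → Fin K → F)
    (M₀ : Matrix (Fin K) (Fin K) F) (hdet : M₀.det ≠ 0)
    (hspan : ∀ k, ∃ l : Fin s → F, M₀ k = ∑ j, l j • R k j)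
    (bad : Fin K → Finset F) (hbad : ∀ k, (bad k).card ≤ N) (hcard : N + K + s < Fintype.card F) :
    ∃ γ : Fin K → F, Function.Injective γ ∧ (∀ k, γ k ∉ bad k) ∧
      (Matrix.of fun k => ∑ j : Fin s, γ k ^ (j : ℕ) • R k j).det ≠ 0 := by
  have main : ∀ S : Finset (Fin K), ∃ γ : Fin K → F, Set.InjOn γ S ∧ (∀ k ∈ S, γ k ∉ bad k) ∧
      (Matrix.of fun k => if k ∈ S then ∑ j : Fin s, γ k ^ (j : ℕ) • R k j else M₀ k).det ≠ 0 := by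
    intro S
    induction S using Finset.induction_on with
    | empty => exact ⟨0, by simp, by simp, by
        simp only [Finset.notMem_empty, if_false]; exact hdet⟩
    | insert a S ha ih =>
      obtain ⟨γ, hinj, hgood, hM⟩ := ih
      set M : Matrix (Fin K) (Fin K) F :=
        Matrix.of fun k => if k ∈ S then ∑ j : Fin s, γ k ^ (j : ℕ) • R k j else M₀ k with hMdef
      -- the determinant as a linear function of row `a`
      let φ : (Fin K → F) →ₗ[F] F :=
        (Matrix.detRowAlternating (n := Fin K) (R := F)).toMultilinearMap.toLinearMap M a
      have hφ : ∀ v, φ v = (M.updateRow a v).det := fun v => rfl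
      have hMa : M a = M₀ a := if_neg ha
      have hc : (fun j => φ (R a j)) ≠ 0 := by
        intro h0
        obtain ⟨l, hl⟩ := hspan a
        have h1 : φ (M₀ a) = 0 := by
          rw [hl, map_sum]
          refine Finset.sum_eq_zero fun j _ => ?_
          rw [map_smul, show φ (R a j) = 0 from congrFun h0 j, smul_zero]
        rw [hφ, ← hMa, Matrix.updateRow_eq_self] at h1
        exact hM h1
      obtain ⟨A, hA, hA'⟩ := exists_small_rootset _ hc
      have hlt : (A ∪ bad a ∪ S.image γ).card < Fintype.card F := by
        have h1 := Finset.card_union_le (A ∪ bad a) (S.image γ)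
        have h2 := Finset.card_union_le A (bad a)
        have h3 : (S.image γ).card ≤ K :=
          Finset.card_image_le.trans ((Finset.card_le_univ S).trans (by simp))
        have h4 := hbad a
        omega
      obtain ⟨g, -, hg⟩ := Finset.exists_mem_notMem_of_card_lt_card
        (show (A ∪ bad a ∪ S.image γ).card < (Finset.univ : Finset F).card from hlt)
      simp only [Finset.mem_union, not_or] at hg
      obtain ⟨⟨hgA, hgb⟩, hgS⟩ := hg
      have hne : ∀ k ∈ S, k ≠ a := fun k hk h => ha (h ▸ hk)
      have hupd : ∀ k ∈ S, Function.update γ a g k = γ k := fun k hk =>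
        Function.update_of_ne (hne k hk) _ _
      refine ⟨Function.update γ a g, ?_, ?_, ?_⟩
      · rw [Finset.coe_insert, Set.injOn_insert (by simpa using ha)]
        refine ⟨hinj.congr fun k hk => (hupd k hk).symm, ?_⟩
        rintro ⟨k, hk, hk'⟩
        rw [hupd k hk, Function.update_self] at hk'
        exact hgS (Finset.mem_image.2 ⟨k, hk, hk'⟩)
      · intro k hk
        rcases Finset.mem_insert.1 hk with rfl | hk
        · rwa [Function.update_self]
        · rw [hupd k hk]
          exact hgood k hk
      · have hnew : (Matrix.of fun k => if k ∈ insert a S then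
            ∑ j : Fin s, Function.update γ a g k ^ (j : ℕ) • R k j else M₀ k)
            = M.updateRow a (∑ j : Fin s, g ^ (j : ℕ) • R a j) := by
          refine Matrix.ext fun k i => ?_
          by_cases hk : k = a
          · subst hk
            simp
          · rw [Matrix.updateRow_ne hk]
            simp [hMdef, hk]
        rw [hnew, ← hφ, map_sum]
        simpa using hA' g hgA
  obtain ⟨γ, h1, h2, h3⟩ := main Finset.univ
  exact ⟨γ, by simpa using h1, fun k => h2 k (Finset.mem_univ k), by simpa using h3⟩

/-- The map `x ↦ (∑ k, x k * γ k ^ j)_{j < s}`. -/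
def moment {K : ℕ} (γ : Fin K → F) (s : ℕ) : (Fin K → F) →ₗ[F] (Fin s → F) where
  toFun x := fun j => ∑ k, x k * γ k ^ (j : ℕ)
  map_add' x y := by ext j; simp [add_mul, Finset.sum_add_distrib]
  map_smul' t x := by ext j; simp [mul_assoc, Finset.mul_sum]

/-- By the Vandermonde determinant, any `s` coordinates suffice to reach every moment vector. -/
theorem exists_moment_eq {K s : ℕ} {γ : Fin K → F} (hγ : Function.Injective γ)
    (T : Finset (Fin K)) (hT : s ≤ T.card) (t : Fin s → F) :
    ∃ x : Fin K → F, (∀ k ∉ T, x k = 0) ∧ moment γ s x = t := by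
  obtain ⟨T', hT', hcard⟩ := Finset.exists_subset_card_eq hT
  let e : Fin s ↪ Fin K := (T'.orderEmbOfFin hcard).toEmbedding
  have hu : IsUnit (Matrix.vandermonde (γ ∘ e)) := by
    rw [Matrix.isUnit_iff_isUnit_det, isUnit_iff_ne_zero, Matrix.det_vandermonde_ne_zero_iff]
    exact hγ.comp e.injective
  obtain ⟨y, hy⟩ := Matrix.vecMul_surjective_iff_isUnit.2 hu t
  refine ⟨Function.extend e y 0, ?_, ?_⟩
  · intro k hk
    refine Function.extend_apply' _ _ _ ?_
    rintro ⟨j, rfl⟩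
    exact hk (hT' (Finset.orderEmbOfFin_mem T' hcard j))
  · rw [← hy]
    ext j
    change ∑ k, Function.extend e y 0 k * γ k ^ (j : ℕ)
      = ∑ l, y l * Matrix.vandermonde (γ ∘ e) l j
    symm
    refine Finset.sum_of_injOn e e.injective.injOn (by simp [Set.MapsTo]) ?_ ?_
    · intro k _ hk
      rw [Function.extend_apply' _ _ _ (by simpa using hk)]
      simp
    · intro l _
      rw [e.injective.extend_apply]
      simp [Matrix.vandermonde_apply]

/-- A decoder whose kernel is the Reed–Solomon code of dimension `r`. -/
theorem exists_decoder {K r B : ℕ} (hrB : r + B = K) {α : Fin K → F}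
    (hα : Function.Injective α) :
    ∃ D : (Fin K → F) →ₗ[F] (Fin B → F), Function.Surjective D ∧
      ∀ u, D u = 0 ↔ ∃ p : Polynomial F, p.degree < r ∧ ∀ i, u i = p.eval (α i) := by
  let ev : Polynomial F →ₗ[F] (Fin K → F) := LinearMap.pi fun i => Polynomial.leval (α i)
  let E : Submodule F (Fin K → F) := (Polynomial.degreeLT F r).map ev
  have hE : Module.finrank F E = r := by
    have hinj : Function.Injective (ev.domRestrict (Polynomial.degreeLT F r)) := by
      rw [← LinearMap.ker_eq_bot, LinearMap.ker_eq_bot']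
      rintro ⟨p, hp⟩ h
      rw [Polynomial.mem_degreeLT] at hp
      refine Subtype.ext (Polynomial.eq_zero_of_degree_lt_of_eval_index_eq_zero (s := Finset.univ)
        hα.injOn (hp.trans_le ?_) fun i _ => congrFun h i)
      simp only [Finset.card_univ, Fintype.card_fin]
      exact_mod_cast (by omega : r ≤ K)
    have h1 := LinearMap.finrank_range_of_inj hinj
    rw [LinearMap.range_domRestrict] at h1
    rw [h1, (Polynomial.degreeLTEquiv F r).finrank_eq]
    simp
  have hq : Module.finrank F ((Fin K → F) ⧸ E) = Module.finrank F (Fin B → F) := by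
    have := E.finrank_quotient_add_finrank
    rw [hE] at this
    simp at this ⊢
    omega
  let φ := LinearEquiv.ofFinrankEq _ _ hq
  refine ⟨φ.toLinearMap.comp E.mkQ, φ.surjective.comp E.mkQ_surjective, fun u => ?_⟩
  simp only [LinearMap.comp_apply, LinearEquiv.coe_coe, LinearEquiv.map_eq_zero_iff,
    Submodule.mkQ_apply, Submodule.Quotient.mk_eq_zero]
  constructor
  · rintro ⟨p, hp, rfl⟩
    exact ⟨p, Polynomial.mem_degreeLT.1 hp, fun i => rfl⟩
  · rintro ⟨p, hp, h⟩
    exact ⟨p, Polynomial.mem_degreeLT.2 hp, (funext h).symm⟩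

/-- The polynomial `X ^ (r + j) - ρ`, with `deg ρ < r = #T`, that vanishes at the points of
`T`. -/
noncomputable def vanPoly {K : ℕ} (α : Fin K → F) (T : Finset (Fin K)) (j : ℕ) : Polynomial F :=
  Polynomial.X ^ (T.card + j) - Lagrange.interpolate T α fun i => α i ^ (T.card + j)

section VanPoly

variable {K : ℕ} {α : Fin K → F}

theorem eval_vanPoly (hα : Function.Injective α) (T : Finset (Fin K))
    {i : Fin K} (hi : i ∈ T) (j : ℕ) : (vanPoly α T j).eval (α i) = 0 := by
  rw [vanPoly, Polynomial.eval_sub, Lagrange.eval_interpolate_at_node _ hα.injOn hi]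
  simp

theorem coeff_vanPoly (hα : Function.Injective α) (T : Finset (Fin K))
    (j : ℕ) {n : ℕ} (hn : T.card ≤ n) :
    (vanPoly α T j).coeff n = if n = T.card + j then 1 else 0 := by
  have h : (Lagrange.interpolate T α fun i => α i ^ (T.card + j)).coeff n = 0 :=
    Polynomial.coeff_eq_zero_of_degree_lt
      ((Lagrange.degree_interpolate_lt _ hα.injOn).trans_le (by exact_mod_cast hn))
  rw [vanPoly, Polynomial.coeff_sub, h, sub_zero, Polynomial.coeff_X_pow]

theorem eval_vanPoly_zero_ne (hα : Function.Injective α) (T : Finset (Fin K))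
    {i : Fin K} (hi : i ∉ T) : (vanPoly α T 0).eval (α i) ≠ 0 := by
  intro h
  have h1 : vanPoly α T 0 = 0 := by
    refine Polynomial.eq_zero_of_degree_lt_of_eval_index_eq_zero (s := insert i T) hα.injOn
      ?_ ?_
    · rw [Finset.card_insert_of_notMem hi, Polynomial.degree_lt_iff_coeff_zero]
      intro n hn
      rw [coeff_vanPoly hα T 0 (by omega), if_neg (by omega)]
    · intro l hl
      rcases Finset.mem_insert.1 hl with rfl | hl
      · exact h
      · exact eval_vanPoly hα T hl 0
  have h2 := coeff_vanPoly hα T 0 le_rfl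
  rw [h1] at h2
  simp at h2

/-- The polynomials `vanPoly α T j`, `j < s`, span those of degree less than `#T + s` that vanish
on `T`. -/
theorem eq_sum_vanPoly (hα : Function.Injective α) (T : Finset (Fin K))
    {s : ℕ} {g : Polynomial F} (hg : g.degree < ((T.card + s : ℕ) : WithBot ℕ))
    (hgT : ∀ i ∈ T, g.eval (α i) = 0) :
    g = ∑ j : Fin s, Polynomial.C (g.coeff (T.card + j)) * vanPoly α T j := by
  rw [← sub_eq_zero]
  refine Polynomial.eq_zero_of_degree_lt_of_eval_index_eq_zero (s := T) hα.injOn ?_ ?_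
  · rw [Polynomial.degree_lt_iff_coeff_zero]
    intro n hn
    rw [Polynomial.coeff_sub, Polynomial.finsetSum_coeff]
    simp_rw [Polynomial.coeff_C_mul, coeff_vanPoly hα T _ hn]
    rcases lt_or_ge n (T.card + s) with h | h
    · rw [Finset.sum_eq_single (⟨n - T.card, by omega⟩ : Fin s)]
      · simp [show T.card + (n - T.card) = n by omega]
      · intro b _ hb
        rw [if_neg, mul_zero]
        intro h'
        exact hb (Fin.ext (by simp; omega))
      · simp
    · rw [Polynomial.coeff_eq_zero_of_degree_lt (hg.trans_le (by exact_mod_cast h)), zero_sub,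
        neg_eq_zero]
      refine Finset.sum_eq_zero fun b _ => ?_
      rw [if_neg (by omega), mul_zero]
  · intro i hi
    simp [Polynomial.eval_finsetSum, hgT i hi, eval_vanPoly hα T hi]

end VanPoly

end Algebra

/-! ### Existence of linear schemes -/

/-- Over a large enough field there is a linear scheme with `max B (K - B)` source key symbols. -/
theorem exists_linearScheme {K B : ℕ} (hB1 : 1 ≤ B) (hBK : B < K) (F : Type) [Field F]
    [Fintype F] [DecidableEq F] (hF : K * K + K + K < Fintype.card F) :
    Nonempty (LinearScheme K B (max B (K - B)) F) := by
  classical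
  obtain ⟨α, hα⟩ : ∃ α : Fin K → F, Function.Injective α := by
    obtain ⟨e⟩ := Function.Embedding.nonempty_of_card_le (α := Fin K) (β := F) (by
      rw [Fintype.card_fin]
      omega)
    exact ⟨e, e.injective⟩
  obtain ⟨r, hr⟩ : ∃ r, r = K - B := ⟨_, rfl⟩
  obtain ⟨s, hs⟩ : ∃ s, s = min r B := ⟨_, rfl⟩
  have hs1 : 0 < s := by omega
  have hsK : s ≤ K := by omega
  have hnK : r + s ≤ K := by omega
  let T : Fin K → Finset (Fin K) := fun k => (Bset K B k)ᶜ
  have hT : ∀ k, (T k).card = r := fun k => by rw [hr]; exact card_compl_Bset hBK k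
  have hTmem : ∀ k i, i ∈ T k ↔ i ∉ Bset K B k := fun k i => Finset.mem_compl
  let e : Fin K → ℕ → Polynomial F := fun k j => vanPoly α (T k) j
  have he_coeff : ∀ k j n, r ≤ n → (e k j).coeff n = if n = r + j then 1 else 0 := by
    intro k j n hn
    have := coeff_vanPoly hα (T k) j (n := n) (by rw [hT]; exact hn)
    rwa [hT] at this
  -- Row `k` below `r + s` holds the values of polynomials vanishing on `T k`; the remaining rows
  -- only complete the matrix to a square one.
  let R : Fin K → Fin s → Fin K → F := fun k j =>
    if (k : ℕ) < r + s then fun i => (e k j).eval (α i) else Pi.single k 1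
  let M₀ : Matrix (Fin K) (Fin K) F := Matrix.of fun k =>
    if (k : ℕ) < r + s then fun i => (Lagrange.nodal (T k ∪ Finset.Iio k) α).eval (α i)
    else Pi.single k 1
  -- `M₀` is triangular with nonzero diagonal, as for Newton interpolation.
  have hM₀ : M₀.det ≠ 0 := by
    have htri : M₀.IsUpperTriangular := by
      intro k i hik
      have hik' : i < k := hik
      change (if (k : ℕ) < r + s then
        fun i => (Lagrange.nodal (T k ∪ Finset.Iio k) α).eval (α i) else Pi.single k 1) i = 0
      split_ifs with hk
      · exact Lagrange.eval_nodal_at_node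
          (Finset.mem_union_right _ (Finset.mem_Iio.2 hik'))
      · exact Pi.single_eq_of_ne hik'.ne 1
    rw [Matrix.det_of_isUpperTriangular htri, Finset.prod_ne_zero_iff]
    intro k _
    change (if (k : ℕ) < r + s then
      fun i => (Lagrange.nodal (T k ∪ Finset.Iio k) α).eval (α i) else Pi.single k 1) k ≠ 0
    split_ifs with hk
    · change (Lagrange.nodal (T k ∪ Finset.Iio k) α).eval (α k) ≠ 0
      rw [Lagrange.eval_nodal, Finset.prod_ne_zero_iff]
      intro i hi
      rw [sub_ne_zero]
      intro h
      rw [← hα h] at hi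
      rcases Finset.mem_union.1 hi with h | h
      · exact (hTmem k k).1 h (self_mem_Bset hB1 k)
      · exact lt_irrefl _ (Finset.mem_Iio.1 h)
    · simp
  have hspan : ∀ k, ∃ l : Fin s → F, M₀ k = ∑ j, l j • R k j := by
    intro k
    by_cases hk : (k : ℕ) < r + s
    · refine ⟨fun j => (Lagrange.nodal (T k ∪ Finset.Iio k) α).coeff (r + j), ?_⟩
      have hdeg : (Lagrange.nodal (T k ∪ Finset.Iio k) α).degree
          < (((T k).card + s : ℕ) : WithBot ℕ) := by
        rw [Lagrange.degree_nodal, hT]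
        have := card_compl_union_Iio_le hBK k
        have h2 : (T k ∪ Finset.Iio k).card < r + s := by
          refine lt_of_le_of_lt this ?_
          omega
        exact_mod_cast h2
      have := eq_sum_vanPoly hα (T k) hdeg fun i hi =>
        Lagrange.eval_nodal_at_node (Finset.mem_union_left _ hi)
      rw [hT] at this
      funext i
      have h3 := congrArg (Polynomial.eval (α i)) this
      rw [Polynomial.eval_finsetSum] at h3
      simp only [M₀, R, Matrix.of_apply, if_pos hk, Finset.sum_apply, Pi.smul_apply, smul_eq_mul]
      rw [h3]
      exact Finset.sum_congr rfl fun j _ => by rw [Polynomial.eval_mul, Polynomial.eval_C]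
    · refine ⟨Pi.single ⟨0, hs1⟩ 1, ?_⟩
      rw [Finset.sum_eq_single ⟨0, hs1⟩]
      · simp only [R, if_neg hk, Pi.single_eq_same, one_smul]
        exact if_neg hk
      · intro j _ hj
        rw [Pi.single_eq_of_ne hj, zero_smul]
      · simp
  -- Each requirement `c k i ≠ 0` excludes few values of `γ k`.
  have hA : ∀ k i, ∃ A : Finset F, A.card ≤ s ∧ (i ∈ Bset K B k → ∀ g ∉ A,
      ∑ j : Fin s, g ^ (j : ℕ) * (e k j).eval (α i) ≠ 0) := by
    intro k i
    by_cases hi : i ∈ Bset K B k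
    · obtain ⟨A, h1, h2⟩ := exists_small_rootset (fun j : Fin s => (e k j).eval (α i)) (by
        intro h
        exact eval_vanPoly_zero_ne hα (T k) (i := i) (by rw [hTmem]; exact not_not.2 hi)
          (congrFun h ⟨0, hs1⟩))
      exact ⟨A, h1, fun _ => h2⟩
    · exact ⟨∅, by simp, fun h => absurd h hi⟩
  choose A hAcard hAne using hA
  obtain ⟨γ, hγ, hγbad, hdet⟩ := exists_generic_rows (N := K * K) R M₀ hM₀ hspan
    (fun k => Finset.univ.biUnion (A k))
    (fun k => by
      refine (Finset.card_biUnion_le_card_mul _ _ K fun i _ => (hAcard k i).trans hsK).trans ?_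
      simp)
    (by omega)
  -- `f k` vanishes off the relays of user `k`, and its top `s` coefficients are the powers of
  -- `γ k`.
  let f : Fin K → Polynomial F := fun k => ∑ j : Fin s, Polynomial.C (γ k ^ (j : ℕ)) * e k j
  have hf_eval : ∀ k i, (f k).eval (α i) = ∑ j : Fin s, γ k ^ (j : ℕ) * (e k j).eval (α i) := by
    intro k i
    simp only [f, Polynomial.eval_finsetSum, Polynomial.eval_mul, Polynomial.eval_C]
  have hf_coeff : ∀ k (j : Fin s), (f k).coeff (r + j) = γ k ^ (j : ℕ) := by
    intro k j
    simp only [f, Polynomial.finsetSum_coeff, Polynomial.coeff_C_mul]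
    rw [Finset.sum_eq_single j]
    · rw [he_coeff k j _ (by omega), if_pos rfl, mul_one]
    · intro b _ hb
      rw [he_coeff k b _ (by omega), if_neg, mul_zero]
      intro h
      exact hb (Fin.ext (by omega))
    · simp
  have hf_coeff' : ∀ k n, r + s ≤ n → (f k).coeff n = 0 := by
    intro k n hn
    simp only [f, Polynomial.finsetSum_coeff, Polynomial.coeff_C_mul]
    refine Finset.sum_eq_zero fun j _ => ?_
    rw [he_coeff k j _ (by omega), if_neg (by omega), mul_zero]
  let comb : (Fin K → F) → Polynomial F := fun x => ∑ k, Polynomial.C (x k) * f k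
  have hcomb_eval : ∀ x i, (comb x).eval (α i) = ∑ k, (f k).eval (α i) * x k := by
    intro x i
    simp only [comb, Polynomial.eval_finsetSum, Polynomial.eval_mul, Polynomial.eval_C]
    exact Finset.sum_congr rfl fun k _ => mul_comm _ _
  have hcomb_coeff : ∀ x (j : Fin s), (comb x).coeff (r + j) = moment γ s x j := by
    intro x j
    simp only [comb, Polynomial.finsetSum_coeff, Polynomial.coeff_C_mul, hf_coeff]
    rfl
  have hcomb_coeff' : ∀ x n, r + s ≤ n → (comb x).coeff n = 0 := by
    intro x n hn
    simp only [comb, Polynomial.finsetSum_coeff, Polynomial.coeff_C_mul]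
    exact Finset.sum_eq_zero fun k _ => by rw [hf_coeff' k n hn, mul_zero]
  have hcomb_deg : ∀ x, (comb x).degree < r ↔ moment γ s x = 0 := by
    intro x
    rw [Polynomial.degree_lt_iff_coeff_zero]
    constructor
    · intro h
      funext j
      rw [← hcomb_coeff]
      exact h _ (by omega)
    · intro h n hn
      rcases lt_or_ge n (r + s) with h1 | h1
      · have := hcomb_coeff x ⟨n - r, by omega⟩
        rw [h] at this
        simpa [show r + (n - r) = n by omega] using this
      · exact hcomb_coeff' x n h1
  -- The polynomials `f k`, `k < r + s`, span all polynomials of degree less than `r + s`.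
  have hspan_f : ∀ p : Polynomial F, p.degree < ((r + s : ℕ) : WithBot ℕ) →
      ∃ x, comb x = p := by
    intro p hp
    obtain ⟨y, hy⟩ := Matrix.vecMul_surjective_iff_isUnit.2
      ((Matrix.isUnit_iff_isUnit_det _).2 (isUnit_iff_ne_zero.2 hdet)) fun i => p.eval (α i)
    let x : Fin K → F := fun k => if (k : ℕ) < r + s then y k else 0
    refine ⟨x, Polynomial.eq_of_degrees_lt_of_eval_index_eq
      (s := Finset.univ.map (Fin.castLEEmb hnK)) hα.injOn ?_ ?_ ?_⟩
    · rw [Finset.card_map, Finset.card_univ, Fintype.card_fin, Polynomial.degree_lt_iff_coeff_zero]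
      exact hcomb_coeff' x
    · rwa [Finset.card_map, Finset.card_univ, Fintype.card_fin]
    · intro i hi
      obtain ⟨i₁, -, rfl⟩ := Finset.mem_map.1 hi
      have hi' := congrFun hy (Fin.castLEEmb hnK i₁)
      rw [← hi', hcomb_eval]
      change _ = ∑ k, y k * (∑ j : Fin s, γ k ^ (j : ℕ) • R k j) (Fin.castLEEmb hnK i₁)
      refine Finset.sum_congr rfl fun k _ => ?_
      rw [Finset.sum_apply]
      by_cases hk : (k : ℕ) < r + s
      · simp only [x, R, if_pos hk, hf_eval, Pi.smul_apply, smul_eq_mul]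
        exact mul_comm _ _
      · simp only [x, R, if_neg hk, mul_zero, Pi.smul_apply]
        rw [Finset.sum_eq_zero, mul_zero]
        intro j _
        rw [Pi.single_eq_of_ne, smul_zero]
        rintro rfl
        exact hk i₁.2
  -- The decoder annihilates the evaluations of polynomials of degree less than `r`; the masks in
  -- that code are the combinations of the `f k` whose moments vanish, which is where keys live.
  obtain ⟨D, hDsurj, hD⟩ := exists_decoder (r := r) (B := B) (by omega) hα
  obtain ⟨g, hg⟩ := LinearMap.exists_rightInverse_of_surjective D (LinearMap.range_eq_top.2 hDsurj)
  have hker : Module.finrank F (Fin (max B (K - B)) → F)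
      = Module.finrank F (LinearMap.ker (moment γ s)) := by
    have hsurj : Function.Surjective (moment γ s) := fun t => by
      obtain ⟨x, -, hx⟩ := exists_moment_eq hγ Finset.univ (by simpa using hsK) t
      exact ⟨x, hx⟩
    have := (moment γ s).finrank_range_add_finrank_ker
    rw [LinearMap.range_eq_top.2 hsurj] at this
    simp at this ⊢
    omega
  let φ := LinearEquiv.ofFinrankEq _ _ hker
  -- The Reed–Solomon codeword agreeing with `u` outside the relays of user `k`.
  let corr : Fin K → (Fin K → F) →ₗ[F] (Fin K → F) := fun k =>
    LinearMap.pi fun i => (Polynomial.leval (α i)).comp (Lagrange.interpolate (T k) α)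
  have hcorr : ∀ k u, D (corr k u) = 0 := by
    intro k u
    refine (hD _).2 ⟨Lagrange.interpolate (T k) α u, ?_, fun i => rfl⟩
    have := Lagrange.degree_interpolate_lt (s := T k) (v := α) u hα.injOn
    rwa [hT] at this
  refine ⟨{
    D := D
    a := fun k => (LinearMap.id - corr k).comp g
    c := fun k i => (f k).eval (α i)
    G := (LinearMap.ker (moment γ s)).subtype.comp φ.toLinearMap
    a_supp := ?_
    c_supp := ?_
    c_ne := ?_
    D_a := ?_
    D_mask := ?_
    exists_mask := ?_
    exists_key := ?_ }⟩
  · intro k v i hi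
    have : (Lagrange.interpolate (T k) α (g v)).eval (α i) = g v i :=
      Lagrange.eval_interpolate_at_node _ hα.injOn ((hTmem k i).2 hi)
    change g v i - (Lagrange.interpolate (T k) α (g v)).eval (α i) = 0
    rw [this, sub_self]
  · intro k i hi
    rw [hf_eval]
    refine Finset.sum_eq_zero fun j _ => ?_
    rw [eval_vanPoly hα (T k) ((hTmem k i).2 hi), mul_zero]
  · intro k i hi
    rw [hf_eval]
    exact hAne k i hi _ fun h => hγbad k (Finset.mem_biUnion.2 ⟨i, Finset.mem_univ i, h⟩)
  · intro k v
    change D (g v - corr k (g v)) = v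
    rw [map_sub, hcorr, sub_zero]
    exact LinearMap.congr_fun hg v
  · intro x
    refine (hD _).2 ⟨comb (φ x).1, (hcomb_deg _).2 (φ x).2, fun i => ?_⟩
    rw [hcomb_eval]
    rfl
  · intro u hu
    obtain ⟨p, hp, hup⟩ := (hD u).1 hu
    obtain ⟨x, hx⟩ := hspan_f p (hp.trans_le (by exact_mod_cast Nat.le_add_right r s))
    have hxk : moment γ s x = 0 := (hcomb_deg x).1 (by rw [hx]; exact hp)
    refine ⟨φ.symm ⟨x, hxk⟩, ?_⟩
    funext i
    rw [hup i, ← hx, hcomb_eval]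
    simp
  · intro i z
    -- Prescribed keys of the users at relay `i` are completed to a key vector with zero moments by
    -- means of the at least `K - B ≥ s` other users.
    obtain ⟨x, hx0, hx⟩ := exists_moment_eq hγ (Uset K B i)ᶜ (by
      have := card_Uset_le hBK i
      rw [Finset.card_compl, Fintype.card_fin]
      omega) (-moment γ s z)
    have hk : moment γ s (z + x) = 0 := by rw [map_add, hx, add_neg_cancel]
    refine ⟨φ.symm ⟨z + x, hk⟩, fun k hkU => ?_⟩
    simp [hx0 k (by simpa using hkU)]

/-- achievability part of Theorem 1 for `B ≤ K−1`: for every `K ≥ 2` and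
`1 ≤ B ≤ K−1` there is a prime power `q₀` such that over any finite field `𝔽_q` with
`q ≥ q₀` there is an instance of the cyclic HSA model with input length `L = B`, source-key
condition, relay security and server security, in which each `X_{k,i}`, each `Y_i` and each
`Z_k` is a single `𝔽_q` symbol and the source key `Z_Σ` is uniform on
`𝔽_q^{max{B, K−B}}`; hence the rate tuple
`(R_X, R_Y, R_Z, R_{Z_Σ}) = (1, 1/B, 1/B, max{1, K/B − 1})` is achievable. -/
theorem hsa_achievability_B_le_K_sub_one
    (K B : ℕ) (hK : 2 ≤ K) (hB1 : 1 ≤ B) (hBK : B ≤ K - 1) :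
    ∃ q₀ : ℕ, IsPrimePow q₀ ∧
      ∀ (F : Type) [Field F] [Fintype F] [DecidableEq F],
        q₀ ≤ Fintype.card F →
          ∃ M : HSAModel K B B F F F F (Fin (max B (K - B)) → F),
            -- the source key is uniform on 𝔽_q^{max{B, K−B}}
            ∀ s : Fin (max B (K - B)) → F,
              pr M.p M.Zsig s = 1 / (Fintype.card F : ℝ) ^ (max B (K - B)) := by
  have hBK' : B < K := by omega
  have hK0 : 0 < K := by omega
  -- Any prime power above `K ^ 2 + 2 * K` would do.
  refine ⟨2 ^ (K * K + K + K), Nat.prime_two.isPrimePow.pow (by positivity), ?_⟩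
  intro F _ _ _ hF
  obtain ⟨S⟩ := exists_linearScheme hB1 hBK' F (lt_of_lt_of_le Nat.lt_two_pow_self hF)
  exact ⟨S.toModel hK0, S.toModel_Zsig hK0⟩
end

section
/- Properties of the recursively defined gradient-coding polynomials: for every k ∈ {1,…,K} and every b ∈ {1,…,B}: (i) p_k(x) divides p_k^{(b)}(x) in 𝔽_q[x]; consequently p_k^{(b)}(θ_j) = 0 for every j ∈ {1,…,K}∖B_k; (ii) p_k^{(b)} is monic of degree K−B+b−1; (iii) for every j ∈ {1,…,B}, the coefficient of x^{K−B+j−1} in p_k^{(b)} equals 1 if j = b and 0 if j ≠ b. In particular, the K×(B·K) matrix whose block of columns indexed by user k collects the coefficients of p_k^{(1)},…,p_k^{(B)} has, in the rows corresponding to the monomials x^{K−B},…,x^{K−1}, the B×B identity matrix in every user's block. -/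
/-!
The coefficients of `p_k^{(b)}` from `x^{K−B}` upwards carry all the information. Multiplying by `x`
shifts this window up by one and moves the coefficient `c_b` of `x^{K−B−1}` into its lowest
position; as `p_k` is monic of degree `K−B`, subtracting `c_b · p_k` cancels exactly that entry and
leaves the others alone. So the window of `p_k^{(b)}` is a unit vector (`gcPoly_coeff`), which gives
the identity block, the degree and monicity at once. For the degree of `p_k`, `Bset K B k` has
exactly `B` elements because `j ↦ k + j mod K` is injective on `{0, …, B−1}` when `B ≤ K`.
-/

open scoped BigOperators Polynomial

/-- The recursively defined gradient-coding polynomials: `gcPoly pk c 0 = pk` and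
`gcPoly pk c b = x · gcPoly pk c (b−1) − (coefficient of x^c in gcPoly pk c (b−1)) · pk`,
so that `p_k^{(b)} = gcPoly p_k (K−B−1) (b−1)`. -/
noncomputable def gcPoly {F : Type} [Field F] (pk : Polynomial F) (c : ℕ) :
    ℕ → Polynomial F
  | 0 => pk
  | b + 1 =>
      Polynomial.X * gcPoly pk c b - Polynomial.C ((gcPoly pk c b).coeff c) * pk

lemma Bset_card (K B : ℕ) (hBK : B ≤ K) (k : Fin K) : (Bset K B k).card = B := by
  unfold Bset
  rw [Finset.card_image_of_injOn, Finset.card_range]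
  intro a ha b hb hab
  simp only [Finset.coe_range, Set.mem_Iio] at ha hb
  have h : (k : ℕ) + a ≡ k + b [MOD K] := congrArg Fin.val hab
  exact (Nat.ModEq.add_left_cancel' _ h).eq_of_lt_of_lt (by omega) (by omega)

lemma dvd_gcPoly {F : Type} [Field F] (p : Polynomial F) (c n : ℕ) : p ∣ gcPoly p c n := by
  induction n with
  | zero => exact dvd_rfl
  | succ n ih => exact dvd_sub (ih.mul_left _) (dvd_mul_left _ _)

/-- From `x^{c+1} = x^{deg p}` upwards, the coefficients of `gcPoly p c n` form a unit vector. -/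
lemma gcPoly_coeff {F : Type} [Field F] {p : Polynomial F} {c : ℕ} (hp : p.Monic)
    (hd : p.natDegree = c + 1) (n m : ℕ) :
    (gcPoly p c n).coeff (c + 1 + m) = if m = n then 1 else 0 := by
  have hlead : p.coeff (c + 1) = 1 := hd ▸ hp.coeff_natDegree
  have hhigh (m : ℕ) : p.coeff (c + 1 + (m + 1)) = 0 :=
    Polynomial.coeff_eq_zero_of_natDegree_lt (by omega)
  induction n generalizing m with
  | zero =>
    cases m with
    | zero => simpa [gcPoly] using hlead
    | succ m => simpa [gcPoly] using hhigh m
  | succ n ih =>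
    rw [gcPoly, Polynomial.coeff_sub, Polynomial.coeff_C_mul]
    cases m with
    | zero => simp [Polynomial.coeff_X_mul, hlead]
    | succ m =>
      rw [hhigh, ← add_assoc, Polynomial.coeff_X_mul, ih]
      simp

lemma gcPoly_natDegree {F : Type} [Field F] {p : Polynomial F} {c : ℕ} (hp : p.Monic)
    (hd : p.natDegree = c + 1) (n : ℕ) : (gcPoly p c n).natDegree = c + 1 + n := by
  apply Polynomial.natDegree_eq_of_le_of_coeff_ne_zero
  · rw [Polynomial.natDegree_le_iff_coeff_eq_zero]
    intro N hN
    obtain ⟨m, rfl⟩ := Nat.exists_eq_add_of_le (show c + 1 ≤ N by omega)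
    rw [gcPoly_coeff hp hd, if_neg (by omega)]
  · simp [gcPoly_coeff hp hd]

/-- properties of the gradient-coding polynomials: with
`p_k(x) = ∏_{i ∉ B_k} (x − θ_i)` of degree `K−B` and `p_k^{(b)} = gcPoly p_k (K−B−1) (b−1)`
for `b ∈ {1,…,B}`:
(i) `p_k ∣ p_k^{(b)}`, hence `p_k^{(b)}(θ_j) = 0` for every `j ∉ B_k`;
(ii) `p_k^{(b)}` is monic of degree `K−B+b−1`;
(iii) for every `j ∈ {1,…,B}`, the coefficient of `x^{K−B+j−1}` in `p_k^{(b)}` is `1` if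
`j = b` and `0` otherwise.  In particular the rows of the coefficient matrix corresponding to
the monomials `x^{K−B},…,x^{K−1}` form the `B×B` identity in every user's block. -/
theorem gcPoly_properties (K B : ℕ) (hK : 2 ≤ K) (hB1 : 1 ≤ B) (hBK : B ≤ K - 1)
    (F : Type) [Field F] [Fintype F] [DecidableEq F]
    (θ : Fin K → F) (hθinj : Function.Injective θ) :
    ∀ k : Fin K, ∀ b : ℕ, 1 ≤ b → b ≤ B →
      (∏ i ∈ Finset.univ \ Bset K B k, (Polynomial.X - Polynomial.C (θ i))) ∣
          gcPoly (∏ i ∈ Finset.univ \ Bset K B k, (Polynomial.X - Polynomial.C (θ i)))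
            (K - B - 1) (b - 1) ∧
      (∀ j : Fin K, j ∉ Bset K B k →
        (gcPoly (∏ i ∈ Finset.univ \ Bset K B k, (Polynomial.X - Polynomial.C (θ i)))
          (K - B - 1) (b - 1)).eval (θ j) = 0) ∧
      (gcPoly (∏ i ∈ Finset.univ \ Bset K B k, (Polynomial.X - Polynomial.C (θ i)))
        (K - B - 1) (b - 1)).Monic ∧
      (gcPoly (∏ i ∈ Finset.univ \ Bset K B k, (Polynomial.X - Polynomial.C (θ i)))
        (K - B - 1) (b - 1)).natDegree = K - B + b - 1 ∧
      (∀ j : ℕ, 1 ≤ j → j ≤ B →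
        (gcPoly (∏ i ∈ Finset.univ \ Bset K B k, (Polynomial.X - Polynomial.C (θ i)))
          (K - B - 1) (b - 1)).coeff (K - B + j - 1) = if j = b then 1 else 0) := by
  intro k b hb1 hbB
  have hmonic : (∏ i ∈ Finset.univ \ Bset K B k,
      (Polynomial.X - Polynomial.C (θ i))).Monic :=
    Polynomial.monic_prod_of_monic _ _ fun i _ => Polynomial.monic_X_sub_C _
  have hdeg : (∏ i ∈ Finset.univ \ Bset K B k,
      (Polynomial.X - Polynomial.C (θ i))).natDegree = K - B - 1 + 1 := by
    rw [Polynomial.natDegree_prod_of_monic _ _ fun i _ => Polynomial.monic_X_sub_C _]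
    simp only [Polynomial.natDegree_X_sub_C, Finset.sum_const, smul_eq_mul, mul_one]
    rw [Finset.card_sdiff_of_subset (Finset.subset_univ _), Finset.card_univ, Fintype.card_fin,
      Bset_card K B (by omega)]
    omega
  have hnat := gcPoly_natDegree hmonic hdeg (b - 1)
  refine ⟨dvd_gcPoly _ _ _, fun j hj => ?_, ?_, by rw [hnat]; omega, fun j hj1 hjB => ?_⟩
  · have hroot : (Polynomial.X - Polynomial.C (θ j)) ∣
        ∏ i ∈ Finset.univ \ Bset K B k, (Polynomial.X - Polynomial.C (θ i)) :=
      Finset.dvd_prod_of_mem _ (by simpa using hj)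
    exact Polynomial.dvd_iff_isRoot.mp (hroot.trans (dvd_gcPoly _ _ _))
  · rw [Polynomial.Monic, Polynomial.leadingCoeff, hnat, gcPoly_coeff hmonic hdeg, if_pos rfl]
  · rw [show K - B + j - 1 = K - B - 1 + 1 + (j - 1) by omega, gcPoly_coeff hmonic hdeg]
    exact if_congr (by omega) rfl rfl
end
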